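/- In the diffusive regime 0 ≤ p < 3/4, the self-normalized estimation error satisfies √(V_n)·(p̂_n − p) → N(0,1) in distribution as n → ∞, i.e., the law of √(V_n)·(p̂_n − p) converges weakly to the standard Gaussian distribution. -/

import Mathlib

open MeasureTheory ProbabilityTheory Filter Finset
open scoped BoundedContinuousFunction ENNReal NNReal Topology

noncomputable section

variable {Ω : Type*}

/-- Position of the elephant random walk: `S n = X 1 + ⋯ + X n`. -/
def erwS (X : ℕ → Ω → ℝ) (n : ℕ) (ω : Ω) : ℝ :=
  ∑ k ∈ Finset.Icc 1 n, X k ω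

/-- `V n = 4 ∑_{k=1}^{n-1} (S k / k)²`, the approximate conditional Fisher information. -/
def erwV (X : ℕ → Ω → ℝ) (n : ℕ) (ω : Ω) : ℝ :=
  4 * ∑ k ∈ Finset.Icc 1 (n - 1), (erwS X k ω / k) ^ 2

/-- The quasi-maximum likelihood estimator `p̂ n` of the memory parameter. -/
def erwPhat (X : ℕ → Ω → ℝ) (n : ℕ) (ω : Ω) : ℝ :=
  (∑ k ∈ Finset.Icc 1 (n - 1), (erwS X k ω / k) * (X (k + 1) ω + erwS X k ω / k)) /
    (2 * ∑ k ∈ Finset.Icc 1 (n - 1), (erwS X k ω / k) ^ 2)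

/-- The elephant random walk hypotheses with memory parameter `p ∈ [0,1]`:
the steps take values in `{-1, 1}`, are adapted to the filtration `ℱ`
(which plays the role of `σ(X_1, …, X_n)`), and
`E[X_{n+1} | ℱ_n] = (2p - 1) · S_n / n` almost surely. -/
def IsERW {m0 : MeasurableSpace Ω} (μ : Measure Ω) (ℱ : Filtration ℕ m0)
    (X : ℕ → Ω → ℝ) (p : ℝ) : Prop :=
  0 ≤ p ∧ p ≤ 1 ∧
  (∀ n, 1 ≤ n → ∀ ω, X n ω = 1 ∨ X n ω = -1) ∧
  (∀ n, 1 ≤ n → Measurable[ℱ n] (X n)) ∧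
  (∀ n, 1 ≤ n → μ[X (n + 1) | ℱ n] =ᵐ[μ] fun ω => (2 * p - 1) * (erwS X n ω / n))

/-!
Write `R k = S k / k`, `a = 2 p - 1` and `U n = ∑ k < n, (R k)²`. Then
`√(V n) (p̂ n - p) = M n / √(U n)`, where `M n = ∑ k < n, R k (X (k + 1) - a R k)` is a martingale
with bounded increments and `⟨M⟩ n = U n - a² ∑ k < n, (R k)⁴`.

Let `H n = ∑ k < n, 1 / (k + 1)`. Telescoping `S n ² / n` along the walk gives
`(1 - 2 a) U n = H n + N n - S n ² / n + (1 - 2 a) ∑ k < n, (R k)² / (k + 1)`, where `N` is a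
martingale. For `a < 1 / 2` the moment recursions give `E S n ² = O(n)` and `E S n ⁴ = O(n²)`, so
that all terms but `H n` are negligible: `U n` and `⟨M⟩ n` are both equivalent to
`H n / (1 - 2 a)` in probability.

A martingale central limit theorem with Slutsky's lemma concludes. To prove the former, stop the
martingale before `⟨M⟩` exceeds twice its expected size. Then `exp (i t M + t² ⟨M⟩ / 2)` is bounded,
and a Taylor expansion of its increments shows that its expectation tends to `1`.
-/

/-! ### Convergence in measure -/

section ConvergenceInMeasure

variable {m0 : MeasurableSpace Ω} {μ : Measure Ω}

lemma tendstoInMeasure_const {ι E : Type*} [PseudoEMetricSpace E] {l : Filter ι} (g : Ω → E) :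
    TendstoInMeasure μ (fun _ : ι => g) l g := fun ε hε => by
  simp [hε.ne', tendsto_const_nhds]

lemma tendstoInMeasure_add {ι E : Type*} [SeminormedAddCommGroup E] {l : Filter ι}
    {f f' : ι → Ω → E} {g g' : Ω → E} (hf : TendstoInMeasure μ f l g)
    (hf' : TendstoInMeasure μ f' l g') :
    TendstoInMeasure μ (fun i ω => f i ω + f' i ω) l (fun ω => g ω + g' ω) := by
  intro ε hε
  have hε2 : 0 < ε / 2 := ENNReal.half_pos hε.ne'
  have hsum := (hf _ hε2).add (hf' _ hε2)
  rw [add_zero] at hsum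
  refine tendsto_of_tendsto_of_tendsto_of_le_of_le tendsto_const_nhds hsum
    (fun _ => zero_le) fun i => le_trans (measure_mono ?_) (measure_union_le _ _)
  intro ω hω
  by_contra hsmall
  simp only [Set.mem_union, Set.mem_ofPred_eq, not_or, not_le] at hω hsmall
  refine absurd (hω.trans (edist_add_add_le _ _ _ _)) (not_le.2 ?_)
  simpa only [ENNReal.add_halves] using ENNReal.add_lt_add hsmall.1 hsmall.2

lemma tendstoInMeasure_comp_continuousAt {ι E F : Type*} [PseudoEMetricSpace E]
    [PseudoEMetricSpace F] {l : Filter ι} {f : ι → Ω → E} {c : E} {φ : E → F}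
    (hf : TendstoInMeasure μ f l fun _ => c) (hφ : ContinuousAt φ c) :
    TendstoInMeasure μ (fun i ω => φ (f i ω)) l fun _ => φ c := by
  intro ε hε
  obtain ⟨δ, hδ, hclose⟩ := EMetric.continuousAt_iff.1 hφ ε hε
  refine tendsto_of_tendsto_of_tendsto_of_le_of_le tendsto_const_nhds (hf δ hδ)
    (fun _ => zero_le) fun i => measure_mono fun ω hω => ?_
  by_contra hsmall
  exact absurd (hclose (not_le.1 hsmall)) (not_lt.2 hω)

lemma tendstoInMeasure_of_eq_off_small {ι E : Type*} [PseudoEMetricSpace E] {l : Filter ι}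
    {f f' : ι → Ω → E} {g : Ω → E} {s : ι → Set Ω} (hf : TendstoInMeasure μ f l g)
    (hs : Tendsto (fun i => μ (s i)) l (𝓝 0)) (heq : ∀ i, ∀ᵐ ω ∂μ, ω ∉ s i → f' i ω = f i ω) :
    TendstoInMeasure μ f' l g := by
  intro ε hε
  have hsum := (hf ε hε).add hs
  rw [add_zero] at hsum
  refine tendsto_of_tendsto_of_tendsto_of_le_of_le tendsto_const_nhds hsum
    (fun _ => zero_le) fun i => le_trans (measure_mono_ae ?_) (measure_union_le _ _)
  filter_upwards [heq i] with ω hω hfar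
  by_cases hmem : ω ∈ s i
  · exact Or.inr hmem
  · exact Or.inl ((hω hmem ▸ hfar : ε ≤ edist (f i ω) (g ω)))

lemma tendstoInMeasure_zero_of_integral_pow_le [IsFiniteMeasure μ] {ι : Type*} {l : Filter ι}
    {f : ι → Ω → ℝ} {b : ι → ℝ} (k : ℕ) (hf_int : ∀ i, Integrable (fun ω => |f i ω| ^ k) μ)
    (hle : ∀ i, ∫ ω, |f i ω| ^ k ∂μ ≤ b i) (hb : Tendsto b l (𝓝 0)) :
    TendstoInMeasure μ f l fun _ => 0 := by
  refine tendstoInMeasure_iff_measureReal_norm.2 fun ε hε => ?_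
  have hscaled := hb.const_mul (ε ^ k)⁻¹
  rw [mul_zero] at hscaled
  refine tendsto_of_tendsto_of_tendsto_of_le_of_le tendsto_const_nhds hscaled
    (fun _ => measureReal_nonneg) fun i => ?_
  rw [inv_mul_eq_div, le_div_iff₀' (by positivity)]
  have hmarkov := mul_meas_ge_le_integral_of_nonneg
    (Eventually.of_forall fun ω => by positivity) (hf_int i) (ε ^ k)
  refine le_trans ?_ (hmarkov.trans (hle i))
  refine mul_le_mul_of_nonneg_left (measureReal_mono fun ω hω => ?_) (by positivity)
  simp only [sub_zero, Real.norm_eq_abs, Set.mem_ofPred_eq] at hω ⊢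
  gcongr

lemma tendsto_integral_comp_of_tendstoInMeasure_const [IsProbabilityMeasure μ] {f : ℕ → Ω → ℝ}
    {c K : ℝ} {φ : ℝ → ℝ} (hf : TendstoInMeasure μ f atTop fun _ => c)
    (hmeas : ∀ n, AEMeasurable (f n) μ) (hφ : Continuous φ)
    (hbdd : ∀ n, ∀ᵐ ω ∂μ, |φ (f n ω)| ≤ K) :
    Tendsto (fun n => ∫ ω, φ (f n ω) ∂μ) atTop (𝓝 (φ c)) := by
  refine tendsto_of_subseq_tendsto fun ns hns => ?_
  obtain ⟨ms, -, hms⟩ := (hf.comp hns).exists_seq_tendsto_ae'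
  refine ⟨ms, ?_⟩
  simpa only [integral_const, probReal_univ, one_smul, Function.comp_apply] using
    tendsto_integral_of_dominated_convergence (fun _ => K)
    (fun n => (hφ.measurable.comp_aemeasurable (hmeas _)).aestronglyMeasurable)
    (integrable_const K) (fun n => hbdd _)
    (hms.mono fun ω hω => (hφ.tendsto c).comp hω)

lemma tendstoInMeasure_div_zero_of_integral_abs_le [IsFiniteMeasure μ] {f : ℕ → Ω → ℝ} {K : ℝ}
    {L : ℕ → ℝ} (hf_int : ∀ n, Integrable (f n) μ) (hle : ∀ n, ∫ ω, |f n ω| ∂μ ≤ K)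
    (hL : Tendsto L atTop atTop) :
    TendstoInMeasure μ (fun n ω => f n ω / L n) atTop fun _ => 0 := by
  refine tendstoInMeasure_zero_of_integral_pow_le 1 (b := fun n => K / |L n|)
    (fun n => by simpa using ((hf_int n).div_const (L n)).abs) (fun n => ?_)
    (tendsto_const_nhds.div_atTop (tendsto_abs_atTop_atTop.comp hL))
  simp only [pow_one, abs_div, integral_div]
  gcongr
  exact hle n

lemma tendstoInMeasure_sum_div_zero [IsFiniteMeasure μ] {f : ℕ → Ω → ℝ} {L : ℕ → ℝ}
    (hf_int : ∀ k, Integrable (f k) μ) (hnonneg : ∀ k ω, 0 ≤ f k ω)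
    (hsummable : Summable fun k => ∫ ω, f k ω ∂μ) (hL : Tendsto L atTop atTop) :
    TendstoInMeasure μ (fun n ω => (∑ k ∈ range n, f k ω) / L n) atTop fun _ => 0 := by
  refine tendstoInMeasure_div_zero_of_integral_abs_le (K := ∑' k, ∫ ω, f k ω ∂μ)
    (fun n => integrable_finsetSum _ fun k _ => hf_int k) (fun n => ?_) hL
  simp only [abs_of_nonneg (sum_nonneg fun k _ => hnonneg k _)]
  rw [integral_finsetSum _ fun k _ => hf_int k]
  exact hsummable.sum_le_tsum _ fun k _ => integral_nonneg (hnonneg k)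

end ConvergenceInMeasure

/-! ### Martingale differences -/

lemma integral_smul_eq_integral_condExp_smul {E : Type*} [NormedAddCommGroup E] [NormedSpace ℝ E]
    [CompleteSpace E] {m m0 : MeasurableSpace Ω} {μ : Measure Ω} [IsFiniteMeasure μ] (hm : m ≤ m0)
    {f : Ω → ℝ} {W : Ω → E} {c : ℝ} (hf : Integrable f μ) (hW : StronglyMeasurable[m] W)
    (hWc : ∀ᵐ ω ∂μ, ‖W ω‖ ≤ c) :
    ∫ ω, f ω • W ω ∂μ = ∫ ω, (μ[f | m]) ω • W ω ∂μ := by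
  rw [← integral_condExp hm]
  exact integral_congr_ae (condExp_smul_of_aestronglyMeasurable_right hf
    (hf.smul_bdd c (hW.mono hm).aestronglyMeasurable hWc) hW.aestronglyMeasurable)

/-- A sequence of martingale differences with common bound `B`. The difference `d k` is the
increment between the times `k` and `k + 1`, so it is `ℱ (k + 1)`-measurable. -/
structure IsBoundedMartingaleDiff {m0 : MeasurableSpace Ω} (d : ℕ → Ω → ℝ) (ℱ : Filtration ℕ m0)
    (μ : Measure Ω) (B : ℝ) : Prop where
  stronglyMeasurable : ∀ k, StronglyMeasurable[ℱ (k + 1)] (d k)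
  ae_abs_le : ∀ k, ∀ᵐ ω ∂μ, |d k ω| ≤ B
  condExp_eq_zero : ∀ k, μ[d k | ℱ k] =ᵐ[μ] 0

/-- The conditional second moment of the increment `d k` given the past `ℱ k`. -/
def condSq {m0 : MeasurableSpace Ω} (d : ℕ → Ω → ℝ) (ℱ : Filtration ℕ m0) (μ : Measure Ω)
    (k : ℕ) : Ω → ℝ :=
  μ[fun ω => d k ω ^ 2 | ℱ k]

/-- The predictable quadratic variation `⟨M⟩ n` of the martingale `M n = ∑ k < n, d k`. -/
def predictableVariation {m0 : MeasurableSpace Ω} (d : ℕ → Ω → ℝ) (ℱ : Filtration ℕ m0)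
    (μ : Measure Ω) (n : ℕ) (ω : Ω) : ℝ :=
  ∑ k ∈ range n, condSq d ℱ μ k ω

section MartingaleDiff

variable {m0 : MeasurableSpace Ω} {d : ℕ → Ω → ℝ} {ℱ : Filtration ℕ m0} {μ : Measure Ω}

lemma stronglyMeasurable_condSq (k : ℕ) : StronglyMeasurable[ℱ k] (condSq d ℱ μ k) :=
  stronglyMeasurable_condExp

lemma condSq_nonneg (k : ℕ) : ∀ᵐ ω ∂μ, 0 ≤ condSq d ℱ μ k ω :=
  condExp_nonneg (Eventually.of_forall fun ω => sq_nonneg (d k ω))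

lemma stronglyMeasurable_predictableVariation (n : ℕ) :
    StronglyMeasurable[ℱ n] (predictableVariation d ℱ μ (n + 1)) :=
  Finset.stronglyMeasurable_fun_sum _ fun k hk =>
    (stronglyMeasurable_condSq k).mono (ℱ.mono (Nat.lt_succ_iff.1 (mem_range.1 hk)))

lemma measurable_predictableVariation (n : ℕ) : Measurable (predictableVariation d ℱ μ n) :=
  Finset.measurable_fun_sum _ fun k _ =>
    ((stronglyMeasurable_condSq k).mono (ℱ.le k)).measurable

lemma monotone_predictableVariation :
    ∀ᵐ ω ∂μ, Monotone fun n => predictableVariation d ℱ μ n ω := by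
  filter_upwards [ae_all_iff.2 fun k => condSq_nonneg (d := d) (ℱ := ℱ) (μ := μ) k] with ω hω
  exact monotone_nat_of_le_succ fun n => by
    simpa only [predictableVariation, sum_range_succ, le_add_iff_nonneg_right] using hω n

lemma integrable_condSq (k : ℕ) : Integrable (condSq d ℱ μ k) μ :=
  integrable_condExp

lemma integral_condSq [IsFiniteMeasure μ] (k : ℕ) :
    ∫ ω, condSq d ℱ μ k ω ∂μ = ∫ ω, d k ω ^ 2 ∂μ :=
  integral_condExp (ℱ.le k)

end MartingaleDiff

namespace IsBoundedMartingaleDiff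

variable {m0 : MeasurableSpace Ω} {d : ℕ → Ω → ℝ} {ℱ : Filtration ℕ m0} {μ : Measure Ω} {B : ℝ}

lemma measurable (hd : IsBoundedMartingaleDiff d ℱ μ B) (k : ℕ) : Measurable (d k) :=
  ((hd.stronglyMeasurable k).mono (ℱ.le _)).measurable

lemma stronglyMeasurable_sum (hd : IsBoundedMartingaleDiff d ℱ μ B) (n : ℕ) :
    StronglyMeasurable[ℱ n] fun ω => ∑ k ∈ range n, d k ω :=
  Finset.stronglyMeasurable_fun_sum _ fun k hk =>
    (hd.stronglyMeasurable k).mono (ℱ.mono (mem_range.1 hk))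

lemma measurable_sum (hd : IsBoundedMartingaleDiff d ℱ μ B) (n : ℕ) :
    Measurable fun ω => ∑ k ∈ range n, d k ω :=
  ((hd.stronglyMeasurable_sum n).mono (ℱ.le n)).measurable

lemma abs_sum_le (hd : IsBoundedMartingaleDiff d ℱ μ B) (n : ℕ) :
    ∀ᵐ ω ∂μ, |∑ k ∈ range n, d k ω| ≤ n * B := by
  filter_upwards [ae_all_iff.2 hd.ae_abs_le] with ω hω
  simpa only [card_range, nsmul_eq_mul] using
    (abs_sum_le_sum_abs _ _).trans (sum_le_card_nsmul (range n) _ B fun k _ => hω k)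

lemma bound_nonneg [NeZero μ] (hd : IsBoundedMartingaleDiff d ℱ μ B) : 0 ≤ B :=
  let ⟨_, hω⟩ := (hd.ae_abs_le 0).exists
  (abs_nonneg _).trans hω

lemma sq_le (hd : IsBoundedMartingaleDiff d ℱ μ B) (k : ℕ) : ∀ᵐ ω ∂μ, d k ω ^ 2 ≤ B ^ 2 := by
  filter_upwards [hd.ae_abs_le k] with ω hω
  exact sq_le_sq' (abs_le.1 hω).1 (abs_le.1 hω).2

section FiniteMeasure

variable [IsFiniteMeasure μ]

lemma integrable (hd : IsBoundedMartingaleDiff d ℱ μ B) (k : ℕ) : Integrable (d k) μ :=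
  .of_bound (hd.measurable k).aestronglyMeasurable B (hd.ae_abs_le k)

lemma integrable_sq (hd : IsBoundedMartingaleDiff d ℱ μ B) (k : ℕ) :
    Integrable (fun ω => d k ω ^ 2) μ := by
  refine .of_bound ((hd.measurable k).pow_const 2).aestronglyMeasurable (B ^ 2) ?_
  filter_upwards [hd.sq_le k] with ω hω
  rwa [Real.norm_of_nonneg (sq_nonneg _)]

lemma condSq_le (hd : IsBoundedMartingaleDiff d ℱ μ B) (k : ℕ) :
    ∀ᵐ ω ∂μ, condSq d ℱ μ k ω ≤ B ^ 2 := by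
  have hle := condExp_mono (m := ℱ k) (hd.integrable_sq k) (integrable_const (B ^ 2)) (hd.sq_le k)
  rwa [condExp_const (ℱ.le k)] at hle

lemma integral_smul_eq_zero (hd : IsBoundedMartingaleDiff d ℱ μ B) {E : Type*}
    [NormedAddCommGroup E] [NormedSpace ℝ E] [CompleteSpace E] {W : Ω → E} {c : ℝ} (k : ℕ)
    (hW : StronglyMeasurable[ℱ k] W) (hWc : ∀ᵐ ω ∂μ, ‖W ω‖ ≤ c) :
    ∫ ω, d k ω • W ω ∂μ = 0 := by
  rw [integral_smul_eq_integral_condExp_smul (ℱ.le k) (hd.integrable k) hW hWc]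
  refine integral_eq_zero_of_ae ?_
  filter_upwards [hd.condExp_eq_zero k] with ω hω
  rw [hω, Pi.zero_apply, Pi.zero_apply, zero_smul]

lemma integrable_sum_sq (hd : IsBoundedMartingaleDiff d ℱ μ B) (n : ℕ) :
    Integrable (fun ω => (∑ k ∈ range n, d k ω) ^ 2) μ := by
  refine .of_bound ((hd.measurable_sum n).pow_const 2).aestronglyMeasurable ((n * B) ^ 2) ?_
  filter_upwards [hd.abs_sum_le n] with ω hω
  rw [norm_pow]
  exact pow_le_pow_left₀ (norm_nonneg _) hω 2

lemma integral_sum_sq (hd : IsBoundedMartingaleDiff d ℱ μ B) (n : ℕ) :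
    ∫ ω, (∑ k ∈ range n, d k ω) ^ 2 ∂μ = ∑ k ∈ range n, ∫ ω, d k ω ^ 2 ∂μ := by
  induction n with
  | zero => simp
  | succ n ih =>
    have hbound := hd.abs_sum_le n
    have hcross : ∫ ω, d n ω • ∑ k ∈ range n, d k ω ∂μ = 0 :=
      hd.integral_smul_eq_zero n (hd.stronglyMeasurable_sum n) hbound
    have hcross_int : Integrable (fun ω => d n ω • ∑ k ∈ range n, d k ω) μ :=
      (hd.integrable n).smul_bdd _ (hd.measurable_sum n).aestronglyMeasurable hbound
    have hsum_int := hd.integrable_sum_sq n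
    calc ∫ ω, (∑ k ∈ range (n + 1), d k ω) ^ 2 ∂μ
        = ∫ ω, ((∑ k ∈ range n, d k ω) ^ 2 + 2 * (d n ω • ∑ k ∈ range n, d k ω))
            + d n ω ^ 2 ∂μ := by
          refine integral_congr_ae (Eventually.of_forall fun ω => ?_)
          simp only [sum_range_succ, smul_eq_mul]
          ring
      _ = ∑ k ∈ range (n + 1), ∫ ω, d k ω ^ 2 ∂μ := by
          rw [integral_add (hsum_int.fun_add (hcross_int.const_mul 2)) (hd.integrable_sq n),
            integral_add hsum_int (hcross_int.const_mul 2), integral_const_mul, hcross, ih,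
            sum_range_succ, mul_zero, add_zero]

lemma predictable_mul (hd : IsBoundedMartingaleDiff d ℱ μ B) {g : ℕ → Ω → ℝ} {c : ℝ}
    (hg : ∀ k, StronglyMeasurable[ℱ k] (g k)) (hgc : ∀ k, ∀ᵐ ω ∂μ, |g k ω| ≤ c) :
    IsBoundedMartingaleDiff (fun k ω => g k ω * d k ω) ℱ μ (c * B) where
  stronglyMeasurable k := ((hg k).mono (ℱ.mono k.le_succ)).mul (hd.stronglyMeasurable k)
  ae_abs_le k := by
    filter_upwards [hd.ae_abs_le k, hgc k] with ω hdω hgω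
    rw [abs_mul]
    exact mul_le_mul hgω hdω (abs_nonneg _) ((abs_nonneg _).trans hgω)
  condExp_eq_zero k := by
    filter_upwards [condExp_stronglyMeasurable_mul_of_bound (ℱ.le k) (hg k) (hd.integrable k) c
      (hgc k), hd.condExp_eq_zero k] with ω hpull hzero
    exact hpull.trans (by rw [Pi.mul_apply, hzero, Pi.zero_apply, mul_zero])

lemma condSq_predictable_mul (hd : IsBoundedMartingaleDiff d ℱ μ B) {g : ℕ → Ω → ℝ} {c : ℝ}
    (hg : ∀ k, StronglyMeasurable[ℱ k] (g k)) (hgc : ∀ k, ∀ᵐ ω ∂μ, |g k ω| ≤ c) (k : ℕ) :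
    ∀ᵐ ω ∂μ, condSq (fun k ω => g k ω * d k ω) ℱ μ k ω = g k ω ^ 2 * condSq d ℱ μ k ω := by
  have hpull := condExp_stronglyMeasurable_mul_of_bound (ℱ.le k) ((hg k).pow 2)
    (hd.integrable_sq k) (c ^ 2) <| by
      filter_upwards [hgc k] with ω hω
      rw [Pi.pow_apply, norm_pow]
      exact pow_le_pow_left₀ (norm_nonneg _) hω 2
  simp only [condSq, mul_pow]
  exact hpull

end FiniteMeasure

end IsBoundedMartingaleDiff

/-! ### Martingale central limit theorem -/

lemma norm_cexp_mul_I_sub_le (y : ℝ) :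
    ‖Complex.exp (y * Complex.I) - (1 + y * Complex.I - y ^ 2 / 2)‖ ≤ |y| ^ 3 * Real.exp |y| := by
  have htaylor := Complex.norm_exp_sub_sum_le_norm_mul_exp (y * Complex.I) 3
  convert! htaylor using 3
  · simp only [sum_range_succ, range_zero, sum_empty, mul_pow, Complex.I_sq, Nat.factorial]
    push_cast
    ring
  all_goals simp

lemma norm_cexp_neg_sub_le {u : ℝ} (hu : 0 ≤ u) :
    ‖Complex.exp (-u) - (1 - u)‖ ≤ u ^ 2 * Real.exp u := by
  have htaylor := Complex.norm_exp_sub_sum_le_norm_mul_exp (-u) 2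
  convert! htaylor using 3
  · simp only [sum_range_succ, range_zero, sum_empty, Nat.factorial]
    push_cast
    ring
  all_goals simp [abs_of_nonneg hu]

/-- The factor in the second-order Taylor estimate `norm_cexp_sub_cexp_sub_le`; it vanishes with
the bound `ε` on the increments. -/
def taylorFactor (t ε : ℝ) : ℝ :=
  |t| ^ 3 * ε * Real.exp (|t| * ε) + (t ^ 2 / 2) ^ 2 * ε ^ 2 * Real.exp (t ^ 2 / 2 * ε ^ 2)

lemma tendsto_taylorFactor (t : ℝ) : Tendsto (taylorFactor t) (𝓝 0) (𝓝 0) := by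
  have hcont : Continuous (taylorFactor t) := by unfold taylorFactor; fun_prop
  simpa [taylorFactor] using hcont.tendsto 0

lemma taylorFactor_nonneg (t : ℝ) {ε : ℝ} (hε : 0 ≤ ε) : 0 ≤ taylorFactor t ε := by
  unfold taylorFactor
  positivity

-- When `v` is the conditional second moment of `x`, the subtracted main term has conditional
-- mean `0`.
lemma norm_cexp_sub_cexp_sub_le (t : ℝ) {ε x v : ℝ} (hx : |x| ≤ ε) (hv : 0 ≤ v)
    (hvε : v ≤ ε ^ 2) :
    ‖Complex.exp ((t * x : ℝ) * Complex.I) - Complex.exp (-(t ^ 2 / 2 * v : ℝ))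
      - (x * (t * Complex.I) + (v - x ^ 2) * (t ^ 2 / 2))‖ ≤ taylorFactor t ε * (x ^ 2 + v) := by
  have hε : 0 ≤ ε := (abs_nonneg x).trans hx
  have hcubic := calc
    |t * x| ^ 3 * Real.exp |t * x| = |t| ^ 3 * |x| * Real.exp (|t| * |x|) * x ^ 2 := by
      rw [abs_mul, ← sq_abs x]; ring
    _ ≤ |t| ^ 3 * ε * Real.exp (|t| * ε) * x ^ 2 := by gcongr
  have hquadratic := calc
    (t ^ 2 / 2 * v) ^ 2 * Real.exp (t ^ 2 / 2 * v)
        = (t ^ 2 / 2) ^ 2 * v * Real.exp (t ^ 2 / 2 * v) * v := by ring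
    _ ≤ (t ^ 2 / 2) ^ 2 * ε ^ 2 * Real.exp (t ^ 2 / 2 * ε ^ 2) * v := by gcongr
  calc _ = ‖(Complex.exp ((t * x : ℝ) * Complex.I)
              - (1 + (t * x : ℝ) * Complex.I - (t * x : ℝ) ^ 2 / 2))
            - (Complex.exp (-(t ^ 2 / 2 * v : ℝ)) - (1 - (t ^ 2 / 2 * v : ℝ)))‖ := by
        congr 1
        push_cast
        ring
    _ ≤ |t| ^ 3 * ε * Real.exp (|t| * ε) * x ^ 2
          + (t ^ 2 / 2) ^ 2 * ε ^ 2 * Real.exp (t ^ 2 / 2 * ε ^ 2) * v :=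
        (norm_sub_le _ _).trans (add_le_add ((norm_cexp_mul_I_sub_le _).trans hcubic)
          ((norm_cexp_neg_sub_le (by positivity)).trans hquadratic))
    _ ≤ taylorFactor t ε * (x ^ 2 + v) := by
        rw [taylorFactor, add_mul]
        gcongr <;> linarith [sq_nonneg x]

/-- `exp (t² q / 2 + i t m)`. Along `q = ⟨M⟩ n` and `m = M n` its expectation is nearly constant
when the increments of the martingale `M` are small. -/
def compensatedExp (t q m : ℝ) : ℂ :=
  Complex.exp ((t ^ 2 / 2 * q : ℝ) + (t * m : ℝ) * Complex.I)

lemma continuous_compensatedExp (t : ℝ) :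
    Continuous fun x : ℝ × ℝ => compensatedExp t x.1 x.2 := by
  unfold compensatedExp
  fun_prop

lemma norm_compensatedExp (t q m : ℝ) : ‖compensatedExp t q m‖ = Real.exp (t ^ 2 / 2 * q) := by
  rw [compensatedExp, Complex.norm_exp, Complex.add_re, Complex.ofReal_re, Complex.re_ofReal_mul,
    Complex.I_re, mul_zero, add_zero]

-- The factor keeps `q + v`, not `q`, because `⟨M⟩ (n + 1)` is already known at time `n`.
lemma compensatedExp_increment (t q v m x : ℝ) :
    compensatedExp t (q + v) (m + x) - compensatedExp t q m =
      compensatedExp t (q + v) m *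
        (Complex.exp ((t * x : ℝ) * Complex.I) - Complex.exp (-(t ^ 2 / 2 * v : ℝ))) := by
  simp only [compensatedExp, mul_sub, ← Complex.exp_add]
  push_cast
  congr 2 <;> ring

namespace IsBoundedMartingaleDiff

variable {m0 : MeasurableSpace Ω} {d : ℕ → Ω → ℝ} {ℱ : Filtration ℕ m0} {μ : Measure Ω} {B : ℝ}

section PullOut

variable [IsFiniteMeasure μ] {W : Ω → ℂ} {c : ℝ} {k : ℕ}

lemma integrable_mul_centered (hd : IsBoundedMartingaleDiff d ℱ μ B)
    (hW : StronglyMeasurable[ℱ k] W) (hWc : ∀ᵐ ω ∂μ, ‖W ω‖ ≤ c) (α β : ℂ) :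
    Integrable (fun ω => W ω * (d k ω * α + (condSq d ℱ μ k ω - d k ω ^ 2) * β)) μ := by
  have hcentered : Integrable
      (fun ω => (d k ω : ℂ) * α + (condSq d ℱ μ k ω - d k ω ^ 2 : ℝ) * β) μ :=
    ((hd.integrable k).ofReal.mul_const α).add
      (((integrable_condSq k).sub (hd.integrable_sq k)).ofReal.mul_const β)
  push_cast at hcentered
  exact hcentered.bdd_mul (hW.mono (ℱ.le k)).aestronglyMeasurable hWc

lemma integral_mul_centered_eq_zero (hd : IsBoundedMartingaleDiff d ℱ μ B)
    (hW : StronglyMeasurable[ℱ k] W) (hWc : ∀ᵐ ω ∂μ, ‖W ω‖ ≤ c) (α β : ℂ) :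
    ∫ ω, W ω * (d k ω * α + (condSq d ℱ μ k ω - d k ω ^ 2) * β) ∂μ = 0 := by
  have hsmul {f : Ω → ℝ} (hf : Integrable f μ) : Integrable (fun ω => f ω • W ω) μ :=
    hf.smul_bdd c (hW.mono (ℱ.le k)).aestronglyMeasurable hWc
  have hlin := hsmul (hd.integrable k)
  have hcond : Integrable (fun ω => condSq d ℱ μ k ω • W ω) μ := hsmul (integrable_condSq k)
  have hsq := hsmul (hd.integrable_sq k)
  have hdiff : Integrable (fun ω => condSq d ℱ μ k ω • W ω - d k ω ^ 2 • W ω) μ := hcond.sub hsq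
  calc ∫ ω, W ω * (d k ω * α + (condSq d ℱ μ k ω - d k ω ^ 2) * β) ∂μ
      = ∫ ω, (d k ω • W ω) * α + (condSq d ℱ μ k ω • W ω - d k ω ^ 2 • W ω) * β ∂μ := by
        refine integral_congr_ae (Eventually.of_forall fun ω => ?_)
        simp only [Complex.real_smul]
        push_cast
        ring
    _ = (∫ ω, d k ω • W ω ∂μ) * α
          + (∫ ω, condSq d ℱ μ k ω • W ω ∂μ - ∫ ω, d k ω ^ 2 • W ω ∂μ) * β := by
        rw [integral_add (hlin.mul_const α) (hdiff.mul_const β), integral_mul_const,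
          integral_mul_const, integral_sub hcond hsq]
    _ = 0 := by
        rw [hd.integral_smul_eq_zero k hW hWc, integral_smul_eq_integral_condExp_smul (ℱ.le k)
          (hd.integrable_sq k) hW hWc, condSq, sub_self, zero_mul, zero_mul, add_zero]

lemma norm_integral_mul_cexp_sub_cexp_le (hd : IsBoundedMartingaleDiff d ℱ μ B)
    (hW : StronglyMeasurable[ℱ k] W) (hWc : ∀ᵐ ω ∂μ, ‖W ω‖ ≤ c) (t : ℝ) :
    ‖∫ ω, W ω * (Complex.exp ((t * d k ω : ℝ) * Complex.I)
        - Complex.exp (-(t ^ 2 / 2 * condSq d ℱ μ k ω : ℝ))) ∂μ‖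
      ≤ c * taylorFactor t B * (2 * ∫ ω, condSq d ℱ μ k ω ∂μ) := by
  set centered : Ω → ℂ := fun ω =>
    d k ω * (t * Complex.I) + (condSq d ℱ μ k ω - d k ω ^ 2) * (t ^ 2 / 2)
  set remainder : Ω → ℂ := fun ω => Complex.exp ((t * d k ω : ℝ) * Complex.I)
    - Complex.exp (-(t ^ 2 / 2 * condSq d ℱ μ k ω : ℝ)) - centered ω
  have hremainder : ∀ᵐ ω ∂μ, ‖W ω * remainder ω‖
      ≤ c * taylorFactor t B * (d k ω ^ 2 + condSq d ℱ μ k ω) := by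
    filter_upwards [hWc, hd.ae_abs_le k, condSq_nonneg k, hd.condSq_le k] with ω hWω hdω hv hvB
    rw [norm_mul, mul_assoc]
    exact mul_le_mul hWω (norm_cexp_sub_cexp_sub_le t hdω hv hvB) (norm_nonneg _)
      ((norm_nonneg _).trans hWω)
  have hdom : Integrable (fun ω => c * taylorFactor t B * (d k ω ^ 2 + condSq d ℱ μ k ω)) μ :=
    ((hd.integrable_sq k).add (integrable_condSq k)).const_mul _
  have hremainder_meas : Measurable fun ω => W ω * remainder ω := by
    have hdk := hd.measurable k
    have hv := ((stronglyMeasurable_condSq (d := d) (ℱ := ℱ) (μ := μ) k).mono (ℱ.le k)).measurable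
    have hW' := (hW.mono (ℱ.le k)).measurable
    fun_prop
  calc _ = ‖∫ ω, W ω * remainder ω + W ω * centered ω ∂μ‖ := by
        congr 2 with ω
        simp only [remainder]
        ring
    _ = ‖∫ ω, W ω * remainder ω ∂μ‖ := by
        rw [integral_add (hdom.mono' hremainder_meas.aestronglyMeasurable hremainder)
          (hd.integrable_mul_centered hW hWc _ _), hd.integral_mul_centered_eq_zero hW hWc,
          add_zero]
    _ ≤ ∫ ω, c * taylorFactor t B * (d k ω ^ 2 + condSq d ℱ μ k ω) ∂μ :=
        norm_integral_le_of_norm_le hdom hremainder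
    _ = c * taylorFactor t B * (2 * ∫ ω, condSq d ℱ μ k ω ∂μ) := by
        rw [integral_const_mul, integral_add (hd.integrable_sq k) (integrable_condSq k),
          ← integral_condSq (ℱ := ℱ), two_mul]

end PullOut

lemma integrable_compensatedExp [IsFiniteMeasure μ] (hd : IsBoundedMartingaleDiff d ℱ μ B)
    (t : ℝ) {C : ℝ} {n : ℕ} (hC : ∀ᵐ ω ∂μ, predictableVariation d ℱ μ n ω ≤ C) :
    Integrable (fun ω => compensatedExp t (predictableVariation d ℱ μ n ω)
      (∑ k ∈ range n, d k ω)) μ := by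
  have hmeas := (continuous_compensatedExp t).measurable.comp
    ((measurable_predictableVariation (d := d) (ℱ := ℱ) (μ := μ) n).prodMk (hd.measurable_sum n))
  refine .of_bound hmeas.aestronglyMeasurable (Real.exp (t ^ 2 / 2 * C)) ?_
  filter_upwards [hC] with ω hω
  rw [norm_compensatedExp]
  gcongr

lemma norm_integral_compensatedExp_succ_sub_le [IsFiniteMeasure μ]
    (hd : IsBoundedMartingaleDiff d ℱ μ B) (t : ℝ) {C : ℝ} {n : ℕ}
    (hC : ∀ᵐ ω ∂μ, predictableVariation d ℱ μ (n + 1) ω ≤ C) :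
    ‖∫ ω, compensatedExp t (predictableVariation d ℱ μ (n + 1) ω) (∑ k ∈ range (n + 1), d k ω) ∂μ
        - ∫ ω, compensatedExp t (predictableVariation d ℱ μ n ω) (∑ k ∈ range n, d k ω) ∂μ‖
      ≤ Real.exp (t ^ 2 / 2 * C) * taylorFactor t B * (2 * ∫ ω, condSq d ℱ μ n ω ∂μ) := by
  have hC' : ∀ᵐ ω ∂μ, predictableVariation d ℱ μ n ω ≤ C := by
    filter_upwards [hC, monotone_predictableVariation (d := d) (ℱ := ℱ) (μ := μ)] with ω hω hmono
    exact (hmono n.le_succ).trans hω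
  have hfactor_meas : StronglyMeasurable[ℱ n] fun ω =>
      compensatedExp t (predictableVariation d ℱ μ (n + 1) ω) (∑ k ∈ range n, d k ω) :=
    (continuous_compensatedExp t).comp_stronglyMeasurable
      ((stronglyMeasurable_predictableVariation n).prodMk (hd.stronglyMeasurable_sum n))
  have hfactor_le : ∀ᵐ ω ∂μ, ‖compensatedExp t (predictableVariation d ℱ μ (n + 1) ω)
      (∑ k ∈ range n, d k ω)‖ ≤ Real.exp (t ^ 2 / 2 * C) := by
    filter_upwards [hC] with ω hω
    rw [norm_compensatedExp]
    gcongr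
  rw [← integral_sub (hd.integrable_compensatedExp t hC) (hd.integrable_compensatedExp t hC')]
  refine le_trans (le_of_eq ?_) (hd.norm_integral_mul_cexp_sub_cexp_le hfactor_meas hfactor_le t)
  congr 2 with ω
  simp only [predictableVariation, sum_range_succ]
  exact compensatedExp_increment t _ _ _ _

lemma norm_integral_compensatedExp_sub_one_le [IsProbabilityMeasure μ]
    (hd : IsBoundedMartingaleDiff d ℱ μ B) (t : ℝ) {C : ℝ} {n : ℕ}
    (hC : ∀ᵐ ω ∂μ, predictableVariation d ℱ μ n ω ≤ C) :
    ‖∫ ω, compensatedExp t (predictableVariation d ℱ μ n ω) (∑ k ∈ range n, d k ω) ∂μ - 1‖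
      ≤ Real.exp (t ^ 2 / 2 * C) * taylorFactor t B * (2 * C) := by
  set E : ℕ → ℂ := fun n =>
    ∫ ω, compensatedExp t (predictableVariation d ℱ μ n ω) (∑ k ∈ range n, d k ω) ∂μ
  have hE0 : E 0 = 1 := by simp [E, predictableVariation, compensatedExp]
  have hincrement : ∀ k ∈ range n, ‖E (k + 1) - E k‖
      ≤ Real.exp (t ^ 2 / 2 * C) * taylorFactor t B * (2 * ∫ ω, condSq d ℱ μ k ω ∂μ) := by
    intro k hk
    refine hd.norm_integral_compensatedExp_succ_sub_le t ?_
    filter_upwards [hC, monotone_predictableVariation (d := d) (ℱ := ℱ) (μ := μ)] with ω hω hmono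
    exact (hmono (mem_range.1 hk)).trans hω
  have htotal : ∑ k ∈ range n, ∫ ω, condSq d ℱ μ k ω ∂μ ≤ C := by
    rw [← integral_finsetSum _ fun k _ => integrable_condSq k]
    refine (integral_mono_ae (integrable_finsetSum _ fun k _ => integrable_condSq k)
      (integrable_const C) hC).trans_eq ?_
    rw [integral_const, probReal_univ, one_smul]
  have hfactor := taylorFactor_nonneg t hd.bound_nonneg
  calc ‖E n - 1‖ = ‖∑ k ∈ range n, (E (k + 1) - E k)‖ := by rw [sum_range_sub, hE0]
    _ ≤ ∑ k ∈ range n,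
          Real.exp (t ^ 2 / 2 * C) * taylorFactor t B * (2 * ∫ ω, condSq d ℱ μ k ω ∂μ) :=
        (norm_sum_le _ _).trans (sum_le_sum hincrement)
    _ ≤ Real.exp (t ^ 2 / 2 * C) * taylorFactor t B * (2 * C) := by
        rw [← mul_sum, ← mul_sum]
        gcongr

end IsBoundedMartingaleDiff

lemma norm_cexp_sub_mul_compensatedExp (t q m : ℝ) :
    ‖Complex.exp ((t * m : ℝ) * Complex.I)
        - Complex.exp (-(t ^ 2 / 2 : ℝ)) * compensatedExp t q m‖
      = |1 - Real.exp (t ^ 2 / 2 * (q - 1))| := by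
  have hfactor : Complex.exp (-(t ^ 2 / 2 : ℝ)) * compensatedExp t q m =
      Complex.exp ((t * m : ℝ) * Complex.I) * Real.exp (t ^ 2 / 2 * (q - 1)) := by
    rw [compensatedExp, Complex.ofReal_exp, ← Complex.exp_add, ← Complex.exp_add]
    push_cast
    congr 1
    ring
  rw [hfactor, ← mul_one_sub, norm_mul, Complex.norm_exp_ofReal_mul_I, one_mul,
    ← Complex.ofReal_one, ← Complex.ofReal_sub, Complex.norm_real, Real.norm_eq_abs]

lemma sum_truncated_le {v : ℕ → ℝ} {c : ℝ} (hv : ∀ k, 0 ≤ v k) (hc : 0 ≤ c) (n : ℕ) :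
    ∑ k ∈ range n, (if ∑ i ∈ range (k + 1), v i ≤ c then v k else 0) ≤ c := by
  induction n with
  | zero => simpa using hc
  | succ n ih =>
    by_cases hn : ∑ i ∈ range (n + 1), v i ≤ c
    · exact (sum_le_sum fun k _ => by split_ifs <;> simp [hv k]).trans hn
    · rw [sum_range_succ, if_neg hn, add_zero]
      exact ih

/-- The predictable factor that normalizes by `√L` and stops the martingale with differences `d`
before its predictable quadratic variation exceeds `2 L`. -/
def truncationFactor {m0 : MeasurableSpace Ω} (d : ℕ → Ω → ℝ) (ℱ : Filtration ℕ m0)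
    (μ : Measure Ω) (L : ℝ) (k : ℕ) (ω : Ω) : ℝ :=
  if predictableVariation d ℱ μ (k + 1) ω ≤ 2 * L then (√L)⁻¹ else 0

/-- The martingale differences `d` after normalization and stopping by `truncationFactor`. -/
def truncatedDiff {m0 : MeasurableSpace Ω} (d : ℕ → Ω → ℝ) (ℱ : Filtration ℕ m0) (μ : Measure Ω)
    (L : ℝ) (k : ℕ) (ω : Ω) : ℝ :=
  truncationFactor d ℱ μ L k ω * d k ω

section Truncation

variable {m0 : MeasurableSpace Ω} {d : ℕ → Ω → ℝ} {ℱ : Filtration ℕ m0} {μ : Measure Ω}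

lemma stronglyMeasurable_truncationFactor (L : ℝ) (k : ℕ) :
    StronglyMeasurable[ℱ k] (truncationFactor d ℱ μ L k) :=
  .ite ((stronglyMeasurable_predictableVariation k).measurable measurableSet_Iic)
    stronglyMeasurable_const stronglyMeasurable_const

lemma abs_truncationFactor_le (L : ℝ) (k : ℕ) (ω : Ω) :
    |truncationFactor d ℱ μ L k ω| ≤ (√L)⁻¹ := by
  unfold truncationFactor
  split_ifs
  · exact (abs_of_nonneg (by positivity)).le
  · simp

lemma sum_truncatedDiff_eq {L : ℝ} (n : ℕ) : ∀ᵐ ω ∂μ, predictableVariation d ℱ μ n ω ≤ 2 * L →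
    ∑ k ∈ range n, truncatedDiff d ℱ μ L k ω = (∑ k ∈ range n, d k ω) / √L := by
  filter_upwards [monotone_predictableVariation (d := d) (ℱ := ℱ) (μ := μ)] with ω hmono hω
  rw [sum_div]
  refine sum_congr rfl fun k hk => ?_
  rw [truncatedDiff, truncationFactor, if_pos ((hmono (mem_range.1 hk)).trans hω), inv_mul_eq_div]

lemma tendsto_measure_exceed_two_mul {L : ℕ → ℝ} (hLtop : Tendsto L atTop atTop)
    (hvar : TendstoInMeasure μ (fun n ω => predictableVariation d ℱ μ n ω / L n) atTop fun _ => 1) :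
    Tendsto (fun n => μ {ω | ¬predictableVariation d ℱ μ n ω ≤ 2 * L n}) atTop (𝓝 0) := by
  refine tendsto_of_tendsto_of_tendsto_of_le_of_le' tendsto_const_nhds
    (tendstoInMeasure_iff_norm.1 hvar 1 one_pos) (Eventually.of_forall fun _ => zero_le) ?_
  filter_upwards [hLtop.eventually_gt_atTop 0] with n hLn
  refine measure_mono fun ω hω => ?_
  simp only [Set.mem_ofPred_eq, not_le] at hω ⊢
  rw [← lt_div_iff₀ hLn] at hω
  exact (le_abs_self _).trans' (by linarith)

end Truncation

namespace IsBoundedMartingaleDiff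

variable {m0 : MeasurableSpace Ω} {d : ℕ → Ω → ℝ} {ℱ : Filtration ℕ m0} {μ : Measure Ω} {B : ℝ}

section FiniteMeasure

variable [IsFiniteMeasure μ]

lemma truncate (hd : IsBoundedMartingaleDiff d ℱ μ B) (L : ℝ) :
    IsBoundedMartingaleDiff (truncatedDiff d ℱ μ L) ℱ μ ((√L)⁻¹ * B) :=
  hd.predictable_mul (stronglyMeasurable_truncationFactor L)
    fun k => Eventually.of_forall (abs_truncationFactor_le L k)

lemma condSq_truncatedDiff (hd : IsBoundedMartingaleDiff d ℱ μ B) {L : ℝ} (hL : 0 ≤ L) (k : ℕ) :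
    ∀ᵐ ω ∂μ, condSq (truncatedDiff d ℱ μ L) ℱ μ k ω = L⁻¹ *
      if predictableVariation d ℱ μ (k + 1) ω ≤ 2 * L then condSq d ℱ μ k ω else 0 := by
  filter_upwards [hd.condSq_predictable_mul (stronglyMeasurable_truncationFactor L)
    (fun k => Eventually.of_forall (abs_truncationFactor_le L k)) k] with ω hω
  refine hω.trans ?_
  unfold truncationFactor
  split_ifs
  · rw [inv_pow, Real.sq_sqrt hL]
  · ring

lemma predictableVariation_truncatedDiff_le (hd : IsBoundedMartingaleDiff d ℱ μ B) {L : ℝ}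
    (hL : 0 ≤ L) (n : ℕ) :
    ∀ᵐ ω ∂μ, predictableVariation (truncatedDiff d ℱ μ L) ℱ μ n ω ≤ 2 := by
  filter_upwards [ae_all_iff.2 (hd.condSq_truncatedDiff hL),
    ae_all_iff.2 fun k => condSq_nonneg (d := d) (ℱ := ℱ) (μ := μ) k] with ω htrunc hnonneg
  simp only [predictableVariation, htrunc, ← mul_sum]
  refine inv_mul_le_of_le_mul₀ hL two_pos.le ?_
  rw [mul_comm L]
  exact sum_truncated_le hnonneg (by positivity) n

lemma predictableVariation_truncatedDiff_eq (hd : IsBoundedMartingaleDiff d ℱ μ B) {L : ℝ}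
    (hL : 0 ≤ L) (n : ℕ) : ∀ᵐ ω ∂μ, predictableVariation d ℱ μ n ω ≤ 2 * L →
    predictableVariation (truncatedDiff d ℱ μ L) ℱ μ n ω =
      predictableVariation d ℱ μ n ω / L := by
  filter_upwards [monotone_predictableVariation (d := d) (ℱ := ℱ) (μ := μ),
    ae_all_iff.2 (hd.condSq_truncatedDiff hL)] with ω hmono htrunc hω
  simp only [predictableVariation, sum_div] at hω ⊢
  refine sum_congr rfl fun k hk => ?_
  rw [htrunc, if_pos ((hmono (mem_range.1 hk)).trans hω), inv_mul_eq_div]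

lemma tendstoInMeasure_predictableVariation_truncatedDiff (hd : IsBoundedMartingaleDiff d ℱ μ B)
    {L : ℕ → ℝ} (hL : ∀ n, 0 ≤ L n) (hLtop : Tendsto L atTop atTop)
    (hvar : TendstoInMeasure μ (fun n ω => predictableVariation d ℱ μ n ω / L n) atTop fun _ => 1) :
    TendstoInMeasure μ (fun n => predictableVariation (truncatedDiff d ℱ μ (L n)) ℱ μ n) atTop
      fun _ => 1 :=
  tendstoInMeasure_of_eq_off_small hvar (tendsto_measure_exceed_two_mul hLtop hvar) fun n => by
    filter_upwards [hd.predictableVariation_truncatedDiff_eq (hL n) n] with ω hω hmem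
    exact hω (not_not.1 hmem)

end FiniteMeasure

lemma norm_integral_cexp_sub_le [IsProbabilityMeasure μ] (hd : IsBoundedMartingaleDiff d ℱ μ B)
    (t : ℝ) {C : ℝ} {n : ℕ} (hC : ∀ᵐ ω ∂μ, predictableVariation d ℱ μ n ω ≤ C) :
    ‖∫ ω, Complex.exp ((t * ∑ k ∈ range n, d k ω : ℝ) * Complex.I) ∂μ
        - Complex.exp (-(t ^ 2 / 2 : ℝ))‖
      ≤ ∫ ω, |1 - Real.exp (t ^ 2 / 2 * (predictableVariation d ℱ μ n ω - 1))| ∂μ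
        + Real.exp (-(t ^ 2 / 2))
          * (Real.exp (t ^ 2 / 2 * C) * taylorFactor t B * (2 * C)) := by
  set φ : Ω → ℂ := fun ω => Complex.exp ((t * ∑ k ∈ range n, d k ω : ℝ) * Complex.I)
  set Z : Ω → ℂ := fun ω =>
    compensatedExp t (predictableVariation d ℱ μ n ω) (∑ k ∈ range n, d k ω)
  set γ : ℂ := Complex.exp (-(t ^ 2 / 2 : ℝ))
  have hγ : ‖γ‖ = Real.exp (-(t ^ 2 / 2)) := by
    rw [Complex.norm_exp, ← Complex.ofReal_neg, Complex.ofReal_re]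
  have hφ_int : Integrable φ μ := by
    have hM := hd.measurable_sum n
    exact .of_bound (by fun_prop) 1
      (Eventually.of_forall fun ω => (Complex.norm_exp_ofReal_mul_I _).le)
  have hZ_int : Integrable Z μ := hd.integrable_compensatedExp t hC
  calc ‖∫ ω, φ ω ∂μ - γ‖ = ‖∫ ω, φ ω - γ * Z ω ∂μ + γ * (∫ ω, Z ω ∂μ - 1)‖ := by
        rw [integral_sub hφ_int (hZ_int.const_mul γ), integral_const_mul]
        congr 1
        ring
    _ ≤ ∫ ω, ‖φ ω - γ * Z ω‖ ∂μ + ‖γ‖ * ‖∫ ω, Z ω ∂μ - 1‖ :=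
        (norm_add_le _ _).trans (add_le_add (norm_integral_le_integral_norm _) (norm_mul _ _).le)
    _ ≤ _ := by
        simp only [φ, Z, γ, norm_cexp_sub_mul_compensatedExp, hγ]
        gcongr
        exact hd.norm_integral_compensatedExp_sub_one_le t hC

end IsBoundedMartingaleDiff

lemma tendstoInDistribution_of_tendsto_integral_cexp {m0 : MeasurableSpace Ω} {μ : Measure Ω}
    [IsProbabilityMeasure μ] {ν : Measure ℝ} [IsProbabilityMeasure ν] {X : ℕ → Ω → ℝ}
    (hX : ∀ n, AEMeasurable (X n) μ)
    (hlim : ∀ t : ℝ, Tendsto (fun n => ∫ ω, Complex.exp ((t * X n ω : ℝ) * Complex.I) ∂μ) atTop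
      (𝓝 (charFun ν t))) :
    TendstoInDistribution X atTop id (fun _ => μ) ν where
  forall_aemeasurable := hX
  tendsto := by
    refine ProbabilityMeasure.tendsto_iff_tendsto_charFun.2 fun t => ?_
    simp only [ProbabilityMeasure.coe_mk, Measure.map_id]
    convert! hlim t using 2 with n
    rw [charFun_apply_real, integral_map (hX n) (Measurable.aestronglyMeasurable (by fun_prop))]
    push_cast
    rfl

namespace IsBoundedMartingaleDiff

variable {m0 : MeasurableSpace Ω} {d : ℕ → Ω → ℝ} {ℱ : Filtration ℕ m0} {μ : Measure Ω} {B : ℝ}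
  {L : ℕ → ℝ}

variable [IsProbabilityMeasure μ]

lemma tendsto_integral_cexp_truncatedDiff (hd : IsBoundedMartingaleDiff d ℱ μ B)
    (hL : ∀ n, 0 ≤ L n) (hLtop : Tendsto L atTop atTop)
    (hvar : TendstoInMeasure μ (fun n ω => predictableVariation d ℱ μ n ω / L n) atTop fun _ => 1)
    (t : ℝ) :
    Tendsto (fun n => ∫ ω, Complex.exp
        ((t * ∑ k ∈ range n, truncatedDiff d ℱ μ (L n) k ω : ℝ) * Complex.I) ∂μ)
      atTop (𝓝 (Complex.exp (-(t ^ 2 / 2 : ℝ)))) := by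
  have hvariation_error : Tendsto (fun n => ∫ ω, |1 - Real.exp (t ^ 2 / 2 *
      (predictableVariation (truncatedDiff d ℱ μ (L n)) ℱ μ n ω - 1))| ∂μ) atTop (𝓝 0) := by
    have hlim := tendsto_integral_comp_of_tendstoInMeasure_const (c := 1)
      (φ := fun q => |1 - Real.exp (t ^ 2 / 2 * (q - 1))|) (K := 1 + Real.exp (t ^ 2 / 2))
      (hd.tendstoInMeasure_predictableVariation_truncatedDiff hL hLtop hvar)
      (fun n => (measurable_predictableVariation n).aemeasurable) (by fun_prop) fun n => by
        filter_upwards [hd.predictableVariation_truncatedDiff_le (hL n) n] with ω hω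
        rw [abs_abs]
        refine (abs_sub _ _).trans ?_
        rw [abs_one, Real.abs_exp]
        gcongr
        exact mul_le_of_le_one_right (by positivity) (by linarith)
    simpa using hlim
  have hincrement_bound : Tendsto (fun n => (√(L n))⁻¹ * B) atTop (𝓝 0) := by
    simpa using ((Real.tendsto_sqrt_atTop.comp hLtop).inv_tendsto_atTop).mul_const B
  have htaylor_error : Tendsto (fun n => Real.exp (-(t ^ 2 / 2)) * (Real.exp (t ^ 2 / 2 * 2)
      * taylorFactor t ((√(L n))⁻¹ * B) * (2 * 2))) atTop (𝓝 0) := by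
    have hfactor := (tendsto_taylorFactor t).comp hincrement_bound
    simpa using ((hfactor.const_mul _).mul_const _).const_mul (Real.exp (-(t ^ 2 / 2)))
  rw [tendsto_iff_norm_sub_tendsto_zero]
  refine squeeze_zero (fun _ => norm_nonneg _) (fun n => ?_)
    (by simpa only [add_zero] using hvariation_error.add htaylor_error)
  exact (hd.truncate (L n)).norm_integral_cexp_sub_le t
    (hd.predictableVariation_truncatedDiff_le (hL n) n)

theorem tendstoInDistribution_sum_div_sqrt (hd : IsBoundedMartingaleDiff d ℱ μ B)
    (hL : ∀ n, 0 ≤ L n) (hLtop : Tendsto L atTop atTop)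
    (hvar : TendstoInMeasure μ (fun n ω => predictableVariation d ℱ μ n ω / L n) atTop fun _ => 1) :
    TendstoInDistribution (fun n ω => (∑ k ∈ range n, d k ω) / √(L n)) atTop id (fun _ => μ)
      (gaussianReal 0 1) := by
  have htruncated : TendstoInDistribution
      (fun n ω => ∑ k ∈ range n, truncatedDiff d ℱ μ (L n) k ω) atTop id (fun _ => μ)
      (gaussianReal 0 1) := by
    refine tendstoInDistribution_of_tendsto_integral_cexp
      (fun n => ((hd.truncate (L n)).measurable_sum n).aemeasurable) fun t => ?_
    convert! hd.tendsto_integral_cexp_truncatedDiff hL hLtop hvar t using 2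
    rw [charFun_gaussianReal]
    push_cast
    congr 1
    simp
  refine tendstoInDistribution_of_tendstoInMeasure_sub _ _ htruncated ?_
    fun n => ((hd.measurable_sum n).div_const _).aemeasurable
  refine tendstoInMeasure_of_eq_off_small (tendstoInMeasure_const 0)
    (tendsto_measure_exceed_two_mul hLtop hvar) fun n => ?_
  filter_upwards [sum_truncatedDiff_eq (d := d) (ℱ := ℱ) (L := L n) n] with ω hω hmem
  simp [hω (not_not.1 hmem)]

end IsBoundedMartingaleDiff

lemma tendstoInDistribution_div_sqrt {m0 : MeasurableSpace Ω} {μ : Measure Ω}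
    [IsProbabilityMeasure μ] {ν : Measure ℝ} [IsProbabilityMeasure ν] {Y A : ℕ → Ω → ℝ}
    {L : ℕ → ℝ} (hY : TendstoInDistribution (fun n ω => Y n ω / √(L n)) atTop id (fun _ => μ) ν)
    (hA : TendstoInMeasure μ (fun n ω => A n ω / L n) atTop fun _ => 1)
    (hL : ∀ᶠ n in atTop, 0 < L n) (hYmeas : ∀ n, AEMeasurable (Y n) μ)
    (hAmeas : ∀ n, AEMeasurable (A n) μ) :
    TendstoInDistribution (fun n ω => Y n ω / √(A n ω)) atTop id (fun _ => μ) ν := by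
  have hfactor : TendstoInMeasure μ (fun n ω => (√(A n ω / L n))⁻¹) atTop fun _ => 1 := by
    simpa using tendstoInMeasure_comp_continuousAt (φ := fun x => (√x)⁻¹) hA
      (Real.continuous_sqrt.continuousAt.inv₀ (by simp))
  have hproduct := hY.continuous_comp_prodMk_of_tendstoInMeasure_const
    (g := fun z : ℝ × ℝ => z.1 * z.2) (by fun_prop) hfactor
    fun n => ((hAmeas n).div_const _).sqrt.inv
  simp only [id, mul_one] at hproduct
  refine tendstoInDistribution_of_tendstoInMeasure_sub _ _ hproduct ?_
    fun n => (hYmeas n).div (hAmeas n).sqrt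
  refine (tendstoInMeasure_const 0).congr' ?_ EventuallyEq.rfl
  filter_upwards [hL] with n hLn
  refine ae_of_all _ fun ω => ?_
  simp only [Pi.sub_apply, Real.sqrt_div' _ hLn.le, inv_div]
  rw [div_mul_div_cancel₀ (Real.sqrt_pos.2 hLn).ne', sub_self, Pi.zero_apply]

/-! ### Elephant random walk -/

lemma pow_succ_add_mul_pow_le {x : ℝ} (hx : 0 < x) (k : ℕ) :
    x ^ (k + 1) + (k + 1) * x ^ k ≤ (x + 1) ^ (k + 1) := by
  have hbernoulli := one_add_mul_le_pow (a := 1 / x)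
    (by linarith [one_div_pos.2 hx]) (k + 1)
  calc x ^ (k + 1) + (k + 1) * x ^ k = x ^ (k + 1) * (1 + (k + 1 : ℕ) * (1 / x)) := by
        push_cast
        field_simp
        ring
    _ ≤ x ^ (k + 1) * (1 + 1 / x) ^ (k + 1) := by gcongr
    _ = (x + 1) ^ (k + 1) := by
        rw [← mul_pow]
        congr 1
        field_simp

lemma exists_le_mul_pow_of_le_one_add_div_mul {u : ℕ → ℝ} {b c : ℝ} {k : ℕ} (hu : ∀ n, 0 ≤ u n)
    (hc : c < k + 1) (hrec : ∀ n : ℕ, 1 ≤ n → u (n + 1) ≤ (1 + c / n) * u n + b * n ^ k) :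
    ∃ D, 0 ≤ D ∧ ∀ n : ℕ, 1 ≤ n → u n ≤ D * n ^ (k + 1) := by
  have hgap : 0 < k + 1 - max c 0 := sub_pos.2 (max_lt hc (by positivity))
  set D := max (u 1) (b / (k + 1 - max c 0)) with hD
  have hD_nonneg : 0 ≤ D := (hu 1).trans (le_max_left _ _)
  have hD_absorb : max c 0 * D + b ≤ (k + 1) * D := by
    have hle : b / (k + 1 - max c 0) ≤ D := le_max_right _ _
    rw [div_le_iff₀ hgap] at hle
    linarith
  refine ⟨D, hD_nonneg, fun n hn => ?_⟩
  induction n, hn using Nat.le_induction with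
  | base => simp [hD]
  | succ n hn ih =>
    have hn_pos : (0 : ℝ) < n := by exact_mod_cast hn
    calc u (n + 1) ≤ (1 + c / n) * u n + b * n ^ k := hrec n hn
      _ ≤ (1 + max c 0 / n) * (D * n ^ (k + 1)) + b * n ^ k := by
          gcongr
          · exact hu n
          · exact le_max_left _ _
      _ = D * n ^ (k + 1) + (max c 0 * D + b) * n ^ k := by
          field_simp
          ring
      _ ≤ D * n ^ (k + 1) + (k + 1) * D * n ^ k := by gcongr
      _ = D * (n ^ (k + 1) + (k + 1) * n ^ k) := by ring
      _ ≤ D * (n + 1 : ℕ) ^ (k + 1) := by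
          push_cast
          gcongr
          exact pow_succ_add_mul_pow_le hn_pos k

/-- The empirical mean `S n / n` of the walk; at time `0` it is `0 / 0 = 0`. -/
def erwMean (X : ℕ → Ω → ℝ) (n : ℕ) (ω : Ω) : ℝ :=
  erwS X n ω / n

/-- The score increment `(S k / k) * (X (k + 1) - a * (S k / k))` with `a = 2 p - 1`, the
martingale difference whose sum is the numerator of the estimation error. It vanishes at
`k = 0`. -/
def erwScore (X : ℕ → Ω → ℝ) (p : ℝ) (k : ℕ) (ω : Ω) : ℝ :=
  erwMean X k ω * (X (k + 1) ω - (2 * p - 1) * erwMean X k ω)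

lemma erwS_succ (X : ℕ → Ω → ℝ) (n : ℕ) (ω : Ω) :
    erwS X (n + 1) ω = erwS X n ω + X (n + 1) ω :=
  sum_Icc_succ_top (Nat.le_add_left 1 n) _

lemma erwMean_zero (X : ℕ → Ω → ℝ) (ω : Ω) : erwMean X 0 ω = 0 := by
  simp [erwMean]

lemma erwS_eq_mul_erwMean (X : ℕ → Ω → ℝ) (n : ℕ) (ω : Ω) :
    erwS X n ω = n * erwMean X n ω := by
  obtain rfl | hn := eq_or_ne n 0
  · simp [erwS]
  · rw [erwMean, mul_div_cancel₀ _ (Nat.cast_ne_zero.2 hn)]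

lemma exists_integral_erwMean_pow_le {m0 : MeasurableSpace Ω} {μ : Measure Ω}
    {X : ℕ → Ω → ℝ} {m : ℕ} (hm : m ≠ 0) (hS : ∃ C, 0 ≤ C ∧ ∀ n : ℕ, 1 ≤ n →
      ∫ ω, erwS X n ω ^ (2 * m) ∂μ ≤ C * n ^ m) :
    ∃ C, ∀ n : ℕ, ∫ ω, erwMean X n ω ^ (2 * m) ∂μ ≤ C / (n + 1) ^ m := by
  obtain ⟨C, hC, hle⟩ := hS
  refine ⟨2 ^ m * C, fun n => ?_⟩
  obtain rfl | hn := Nat.eq_zero_or_pos n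
  · simp only [erwMean_zero, ne_eq, mul_eq_zero, OfNat.ofNat_ne_zero, hm, or_self,
      not_false_eq_true, zero_pow, integral_zero]
    positivity
  · have hn_one : (1 : ℝ) ≤ n := by exact_mod_cast hn
    calc ∫ ω, erwMean X n ω ^ (2 * m) ∂μ = (∫ ω, erwS X n ω ^ (2 * m) ∂μ) / n ^ (2 * m) := by
          simp only [erwMean, div_pow, integral_div]
      _ ≤ C * n ^ m / n ^ (2 * m) := by gcongr; exact hle n hn
      _ = 2 ^ m * C / (n + n) ^ m := by
          rw [← two_mul, mul_pow, two_mul m, pow_add]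
          field_simp
      _ ≤ 2 ^ m * C / (n + 1) ^ m := by gcongr

namespace IsERW

variable {m0 : MeasurableSpace Ω} {μ : Measure Ω} {ℱ : Filtration ℕ m0} {X : ℕ → Ω → ℝ} {p : ℝ}

lemma abs_two_mul_sub_one_le (hX : IsERW μ ℱ X p) : |2 * p - 1| ≤ 1 := by
  rw [abs_le]
  constructor <;> linarith [hX.1, hX.2.1]

lemma abs_step (hX : IsERW μ ℱ X p) (n : ℕ) (ω : Ω) : |X (n + 1) ω| = 1 :=
  (abs_eq zero_le_one).2 (hX.2.2.1 (n + 1) n.succ_pos ω)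

lemma step_sq (hX : IsERW μ ℱ X p) (n : ℕ) (ω : Ω) : X (n + 1) ω ^ 2 = 1 := by
  rw [← sq_abs, hX.abs_step, one_pow]

lemma stronglyMeasurable_step (hX : IsERW μ ℱ X p) (n : ℕ) :
    StronglyMeasurable[ℱ (n + 1)] (X (n + 1)) :=
  (hX.2.2.2.1 (n + 1) n.succ_pos).stronglyMeasurable

lemma condExp_step (hX : IsERW μ ℱ X p) {n : ℕ} (hn : 1 ≤ n) :
    μ[X (n + 1) | ℱ n] =ᵐ[μ] fun ω => (2 * p - 1) * erwMean X n ω :=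
  hX.2.2.2.2 n hn

lemma stronglyMeasurable_erwS (hX : IsERW μ ℱ X p) (n : ℕ) :
    StronglyMeasurable[ℱ n] (erwS X n) :=
  Finset.stronglyMeasurable_fun_sum _ fun k hk =>
    ((hX.2.2.2.1 k (mem_Icc.1 hk).1).mono (ℱ.mono (mem_Icc.1 hk).2) le_rfl).stronglyMeasurable

lemma stronglyMeasurable_erwMean (hX : IsERW μ ℱ X p) (n : ℕ) :
    StronglyMeasurable[ℱ n] (erwMean X n) :=
  ((hX.stronglyMeasurable_erwS n).measurable.div_const _).stronglyMeasurable

lemma measurable_erwMean (hX : IsERW μ ℱ X p) (n : ℕ) : Measurable (erwMean X n) :=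
  ((hX.stronglyMeasurable_erwMean n).mono (ℱ.le n)).measurable

lemma abs_erwS_le (hX : IsERW μ ℱ X p) (n : ℕ) (ω : Ω) : |erwS X n ω| ≤ n := by
  induction n with
  | zero => simp [erwS]
  | succ n ih =>
    rw [erwS_succ, Nat.cast_succ]
    exact (abs_add_le _ _).trans (add_le_add ih (hX.abs_step n ω).le)

lemma abs_erwMean_le (hX : IsERW μ ℱ X p) (n : ℕ) (ω : Ω) : |erwMean X n ω| ≤ 1 := by
  rw [erwMean, abs_div, Nat.abs_cast]
  exact div_le_one_of_le₀ (hX.abs_erwS_le n ω) n.cast_nonneg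

lemma abs_erwMean_pow_le (hX : IsERW μ ℱ X p) (n m : ℕ) (ω : Ω) : |erwMean X n ω ^ m| ≤ 1 := by
  rw [abs_pow]
  exact pow_le_one₀ (abs_nonneg _) (hX.abs_erwMean_le n ω)

lemma abs_erwS_pow_le (hX : IsERW μ ℱ X p) (n m : ℕ) (ω : Ω) : |erwS X n ω ^ m| ≤ n ^ m := by
  rw [abs_pow]
  exact pow_le_pow_left₀ (abs_nonneg _) (hX.abs_erwS_le n ω) m

section FiniteMeasure

variable [IsFiniteMeasure μ]

lemma integrable_step (hX : IsERW μ ℱ X p) (n : ℕ) : Integrable (X (n + 1)) μ :=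
  .of_bound ((hX.stronglyMeasurable_step n).mono (ℱ.le _)).aestronglyMeasurable 1
    (ae_of_all _ fun ω => (hX.abs_step n ω).le)

lemma integrable_erwMean_pow (hX : IsERW μ ℱ X p) (n m : ℕ) :
    Integrable (fun ω => erwMean X n ω ^ m) μ :=
  .of_bound ((hX.measurable_erwMean n).pow_const m).aestronglyMeasurable 1
    (ae_of_all _ (hX.abs_erwMean_pow_le n m))

lemma integrable_erwS_pow (hX : IsERW μ ℱ X p) (n m : ℕ) :
    Integrable (fun ω => erwS X n ω ^ m) μ := by
  simpa only [erwS_eq_mul_erwMean, mul_pow] using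
    (hX.integrable_erwMean_pow n m).const_mul ((n : ℝ) ^ m)

lemma integrable_step_mul_erwS_pow (hX : IsERW μ ℱ X p) (n m : ℕ) :
    Integrable (fun ω => X (n + 1) ω * erwS X n ω ^ m) μ :=
  (hX.integrable_step n).mul_bdd (hX.integrable_erwS_pow n m).aestronglyMeasurable
    (ae_of_all _ (hX.abs_erwS_pow_le n m))

lemma integral_step_mul_erwS_pow (hX : IsERW μ ℱ X p) {n : ℕ} (hn : 1 ≤ n) (m : ℕ) :
    ∫ ω, X (n + 1) ω * erwS X n ω ^ m ∂μ
      = (2 * p - 1) / n * ∫ ω, erwS X n ω ^ (m + 1) ∂μ := by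
  rw [← integral_const_mul]
  refine (integral_smul_eq_integral_condExp_smul (ℱ.le n) (hX.integrable_step n)
    ((hX.stronglyMeasurable_erwS n).pow m)
    (ae_of_all _ (hX.abs_erwS_pow_le n m))).trans (integral_congr_ae ?_)
  filter_upwards [hX.condExp_step hn] with ω hω
  rw [hω, erwMean, smul_eq_mul, Pi.pow_apply]
  ring

end FiniteMeasure

section Moments

variable [IsProbabilityMeasure μ]

lemma integral_erwS_succ_sq (hX : IsERW μ ℱ X p) {n : ℕ} (hn : 1 ≤ n) :
    ∫ ω, erwS X (n + 1) ω ^ 2 ∂μ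
      = (1 + 2 * (2 * p - 1) / n) * ∫ ω, erwS X n ω ^ 2 ∂μ + 1 := by
  have hsq := hX.integrable_erwS_pow n 2
  have hcross := (hX.integrable_step_mul_erwS_pow n 1).const_mul 2
  calc ∫ ω, erwS X (n + 1) ω ^ 2 ∂μ
      = ∫ ω, (erwS X n ω ^ 2 + 2 * (X (n + 1) ω * erwS X n ω ^ 1)) + 1 ∂μ := by
        refine integral_congr_ae (ae_of_all _ fun ω => ?_)
        simp only [erwS_succ]
        linear_combination hX.step_sq n ω
    _ = _ := by
        rw [integral_add (hsq.fun_add hcross) (integrable_const 1), integral_add hsq hcross,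
          integral_const_mul, hX.integral_step_mul_erwS_pow hn, integral_const, probReal_univ,
          one_smul]
        ring

lemma integral_erwS_succ_pow_four (hX : IsERW μ ℱ X p) {n : ℕ} (hn : 1 ≤ n) :
    ∫ ω, erwS X (n + 1) ω ^ 4 ∂μ
      = (1 + 4 * (2 * p - 1) / n) * ∫ ω, erwS X n ω ^ 4 ∂μ
        + (6 + 4 * (2 * p - 1) / n) * ∫ ω, erwS X n ω ^ 2 ∂μ + 1 := by
  have hfour := hX.integrable_erwS_pow n 4
  have hcube := (hX.integrable_step_mul_erwS_pow n 3).const_mul 4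
  have hsq := (hX.integrable_erwS_pow n 2).const_mul 6
  have hone := (hX.integrable_step_mul_erwS_pow n 1).const_mul 4
  calc ∫ ω, erwS X (n + 1) ω ^ 4 ∂μ
      = ∫ ω, (((erwS X n ω ^ 4 + 4 * (X (n + 1) ω * erwS X n ω ^ 3)) + 6 * erwS X n ω ^ 2)
          + 4 * (X (n + 1) ω * erwS X n ω ^ 1)) + 1 ∂μ := by
        refine integral_congr_ae (ae_of_all _ fun ω => ?_)
        simp only [erwS_succ]
        linear_combination (6 * erwS X n ω ^ 2 + 4 * erwS X n ω * X (n + 1) ω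
          + X (n + 1) ω ^ 2 + 1) * hX.step_sq n ω
    _ = _ := by
        rw [integral_add (((hfour.fun_add hcube).fun_add hsq).fun_add hone) (integrable_const 1),
          integral_add ((hfour.fun_add hcube).fun_add hsq) hone,
          integral_add (hfour.fun_add hcube) hsq, integral_add hfour hcube]
        simp only [integral_const_mul, hX.integral_step_mul_erwS_pow hn, integral_const,
          probReal_univ, one_smul]
        ring

lemma exists_integral_erwS_sq_le (hX : IsERW μ ℱ X p) (hp : p < 3 / 4) :
    ∃ C, 0 ≤ C ∧ ∀ n : ℕ, 1 ≤ n → ∫ ω, erwS X n ω ^ 2 ∂μ ≤ C * n := by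
  obtain ⟨C, hC, hle⟩ := exists_le_mul_pow_of_le_one_add_div_mul (k := 0) (b := 1)
    (u := fun n => ∫ ω, erwS X n ω ^ 2 ∂μ) (c := 2 * (2 * p - 1))
    (fun n => integral_nonneg fun ω => by positivity) (by norm_num; linarith) fun n hn => by
      simpa using (hX.integral_erwS_succ_sq hn).le
  exact ⟨C, hC, fun n hn => by simpa using hle n hn⟩

lemma exists_integral_erwS_pow_four_le (hX : IsERW μ ℱ X p) (hp : p < 3 / 4) :
    ∃ C, 0 ≤ C ∧ ∀ n : ℕ, 1 ≤ n → ∫ ω, erwS X n ω ^ 4 ∂μ ≤ C * n ^ 2 := by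
  obtain ⟨C, -, hsq⟩ := hX.exists_integral_erwS_sq_le hp
  refine exists_le_mul_pow_of_le_one_add_div_mul (k := 1) (b := 10 * C + 1)
    (u := fun n => ∫ ω, erwS X n ω ^ 4 ∂μ) (c := 4 * (2 * p - 1))
    (fun n => integral_nonneg fun ω => by positivity) (by norm_num; linarith) fun n hn => ?_
  have hn_one : (1 : ℝ) ≤ n := by exact_mod_cast hn
  have hcoef : 6 + 4 * (2 * p - 1) / n ≤ 10 := by
    have : 4 * (2 * p - 1) / n ≤ 4 :=
      div_le_of_le_mul₀ (by positivity) (by norm_num) (by nlinarith [hX.2.1])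
    linarith
  rw [hX.integral_erwS_succ_pow_four hn, add_assoc, pow_one]
  gcongr
  calc (6 + 4 * (2 * p - 1) / n) * ∫ ω, erwS X n ω ^ 2 ∂μ + 1 ≤ 10 * (C * n) + n := by
        gcongr
        exact hsq n hn
    _ = (10 * C + 1) * n := by ring

lemma exists_integral_erwMean_sq_le (hX : IsERW μ ℱ X p) (hp : p < 3 / 4) :
    ∃ C, ∀ n : ℕ, ∫ ω, erwMean X n ω ^ 2 ∂μ ≤ C / (n + 1) := by
  simpa using exists_integral_erwMean_pow_le one_ne_zero
    (by simpa using hX.exists_integral_erwS_sq_le hp)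

lemma exists_integral_erwMean_pow_four_le (hX : IsERW μ ℱ X p) (hp : p < 3 / 4) :
    ∃ C, ∀ n : ℕ, ∫ ω, erwMean X n ω ^ 4 ∂μ ≤ C / (n + 1) ^ 2 :=
  exists_integral_erwMean_pow_le two_ne_zero (hX.exists_integral_erwS_pow_four_le hp)

end Moments

lemma abs_erwScore_le (hX : IsERW μ ℱ X p) (k : ℕ) (ω : Ω) : |erwScore X p k ω| ≤ 2 := by
  have hdrift : |(2 * p - 1) * erwMean X k ω| ≤ 1 := by
    rw [abs_mul]
    exact mul_le_one₀ hX.abs_two_mul_sub_one_le (abs_nonneg _) (hX.abs_erwMean_le k ω)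
  calc |erwScore X p k ω| = |erwMean X k ω| * |X (k + 1) ω - (2 * p - 1) * erwMean X k ω| :=
        abs_mul _ _
    _ ≤ 1 * (|X (k + 1) ω| + |(2 * p - 1) * erwMean X k ω|) :=
        mul_le_mul (hX.abs_erwMean_le k ω) (abs_sub _ _) (abs_nonneg _) zero_le_one
    _ ≤ 2 := by linarith [hX.abs_step k ω]

lemma stronglyMeasurable_erwScore (hX : IsERW μ ℱ X p) (k : ℕ) :
    StronglyMeasurable[ℱ (k + 1)] (erwScore X p k) := by
  have hmean := (hX.stronglyMeasurable_erwMean k).mono (ℱ.mono k.le_succ)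
  exact hmean.mul ((hX.stronglyMeasurable_step k).sub (hmean.const_mul _))

lemma condExp_erwScore [IsFiniteMeasure μ] (hX : IsERW μ ℱ X p) (k : ℕ) :
    μ[erwScore X p k | ℱ k] =ᵐ[μ] 0 := by
  obtain rfl | hk := Nat.eq_zero_or_pos k
  · have hzero : erwScore X p 0 = 0 := funext fun ω => by simp [erwScore, erwMean_zero]
    rw [hzero, condExp_zero]
  have hdrift_meas := (hX.stronglyMeasurable_erwMean k).const_mul (2 * p - 1)
  have hdrift_int : Integrable (fun ω => (2 * p - 1) * erwMean X k ω) μ := by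
    simpa using (hX.integrable_erwMean_pow k 1).const_mul (2 * p - 1)
  have hpull := condExp_stronglyMeasurable_mul_of_bound (ℱ.le k) (hX.stronglyMeasurable_erwMean k)
    ((hX.integrable_step k).sub hdrift_int) 1 (ae_of_all _ (hX.abs_erwMean_le k))
  filter_upwards [hpull, condExp_sub (hX.integrable_step k) hdrift_int (ℱ k), hX.condExp_step hk]
    with ω hpull hsub hstep
  refine hpull.trans ?_
  rw [Pi.mul_apply, hsub, Pi.sub_apply, hstep,
    condExp_of_stronglyMeasurable (ℱ.le k) hdrift_meas hdrift_int, sub_self, mul_zero,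
    Pi.zero_apply]

lemma isBoundedMartingaleDiff_erwScore [IsFiniteMeasure μ] (hX : IsERW μ ℱ X p) :
    IsBoundedMartingaleDiff (erwScore X p) ℱ μ 2 where
  stronglyMeasurable := hX.stronglyMeasurable_erwScore
  ae_abs_le k := ae_of_all _ (hX.abs_erwScore_le k)
  condExp_eq_zero := hX.condExp_erwScore

lemma erwScore_sq (hX : IsERW μ ℱ X p) (k : ℕ) (ω : Ω) :
    erwScore X p k ω ^ 2 = (erwMean X k ω ^ 2 - (2 * p - 1) ^ 2 * erwMean X k ω ^ 4)
      + (-2 * (2 * p - 1)) * erwMean X k ω ^ 2 * erwScore X p k ω := by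
  unfold erwScore
  linear_combination erwMean X k ω ^ 2 * hX.step_sq k ω

lemma condSq_erwScore [IsFiniteMeasure μ] (hX : IsERW μ ℱ X p) (k : ℕ) :
    ∀ᵐ ω ∂μ, condSq (erwScore X p) ℱ μ k ω
      = erwMean X k ω ^ 2 - (2 * p - 1) ^ 2 * erwMean X k ω ^ 4 := by
  have hmean := fun j => hX.stronglyMeasurable_erwMean j
  have hpast_meas : StronglyMeasurable[ℱ k]
      fun ω => erwMean X k ω ^ 2 - (2 * p - 1) ^ 2 * erwMean X k ω ^ 4 :=
    ((hmean k).pow 2).sub (((hmean k).pow 4).const_mul _)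
  have hpast_int : Integrable
      (fun ω => erwMean X k ω ^ 2 - (2 * p - 1) ^ 2 * erwMean X k ω ^ 4) μ :=
    (hX.integrable_erwMean_pow k 2).sub ((hX.integrable_erwMean_pow k 4).const_mul _)
  have hmartingale := hX.isBoundedMartingaleDiff_erwScore.predictable_mul
    (g := fun j ω => (-2 * (2 * p - 1)) * erwMean X j ω ^ 2) (c := |-2 * (2 * p - 1)|)
    (fun j => ((hmean j).pow 2).const_mul _) fun j => ae_of_all _ fun ω => by
      rw [abs_mul]
      exact mul_le_of_le_one_right (abs_nonneg _) (hX.abs_erwMean_pow_le j 2 ω)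
  simp only [condSq, hX.erwScore_sq]
  filter_upwards [condExp_add hpast_int (hmartingale.integrable k) (ℱ k),
    hmartingale.condExp_eq_zero k] with ω hadd hzero
  refine hadd.trans ?_
  rw [Pi.add_apply, hzero, condExp_of_stronglyMeasurable (ℱ.le k) hpast_meas hpast_int,
    Pi.zero_apply, add_zero]

lemma integral_erwScore_sq_le [IsFiniteMeasure μ] (hX : IsERW μ ℱ X p) (k : ℕ) :
    ∫ ω, erwScore X p k ω ^ 2 ∂μ ≤ ∫ ω, erwMean X k ω ^ 2 ∂μ := by
  rw [← integral_condSq (ℱ := ℱ)]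
  refine integral_mono_ae (integrable_condSq k) (hX.integrable_erwMean_pow k 2) ?_
  filter_upwards [hX.condSq_erwScore k] with ω hω
  rw [hω]
  exact sub_le_self _ (by positivity)

lemma isBoundedMartingaleDiff_weighted_erwScore [IsFiniteMeasure μ] (hX : IsERW μ ℱ X p) :
    IsBoundedMartingaleDiff (fun k ω => 2 * k / ((k : ℝ) + 1) * erwScore X p k ω) ℱ μ (2 * 2) :=
  hX.isBoundedMartingaleDiff_erwScore.predictable_mul (g := fun k _ => 2 * k / ((k : ℝ) + 1))
    (fun _ => stronglyMeasurable_const) fun k => ae_of_all _ fun _ => by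
      rw [abs_of_nonneg (by positivity)]
      exact div_le_of_le_mul₀ (by positivity) (by positivity) (by linarith)

lemma erwS_sq_div_eq (hX : IsERW μ ℱ X p) (n : ℕ) (ω : Ω) :
    erwS X n ω ^ 2 / n = ∑ k ∈ range n, 1 / ((k : ℝ) + 1)
      + ∑ k ∈ range n, 2 * k / ((k : ℝ) + 1) * erwScore X p k ω
      - (3 - 4 * p) * (∑ k ∈ range n, erwMean X k ω ^ 2
        - ∑ k ∈ range n, erwMean X k ω ^ 2 / ((k : ℝ) + 1)) := by
  induction n with
  | zero => simp
  | succ n ih =>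
    rw [erwS_eq_mul_erwMean] at ih
    have hdiv : (n * erwMean X n ω) ^ 2 / n = n * erwMean X n ω ^ 2 := by
      obtain rfl | hn := eq_or_ne n 0
      · simp
      · field_simp
    rw [hdiv] at ih
    have hincrement : erwS X (n + 1) ω ^ 2 / ((n : ℝ) + 1) = n * erwMean X n ω ^ 2
        + 1 / ((n : ℝ) + 1) + 2 * n / ((n : ℝ) + 1) * erwScore X p n ω
        - (3 - 4 * p) * (erwMean X n ω ^ 2 - erwMean X n ω ^ 2 / ((n : ℝ) + 1)) := by
      rw [erwS_succ, erwS_eq_mul_erwMean, erwScore]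
      field_simp
      linear_combination hX.step_sq n ω
    simp only [sum_range_succ, Nat.cast_succ]
    linear_combination hincrement + ih

end IsERW

/-- The growth `(∑ k < n, 1 / (k + 1)) / (3 - 4 p)` of the sum of squared empirical means. -/
def erwScale (p : ℝ) (n : ℕ) : ℝ :=
  (∑ k ∈ range n, 1 / ((k : ℝ) + 1)) / (3 - 4 * p)

lemma tendsto_erwScale {p : ℝ} (hp : p < 3 / 4) : Tendsto (erwScale p) atTop atTop :=
  Real.tendsto_sum_range_one_div_nat_succ_atTop.atTop_div_const (by linarith)

lemma erwScale_nonneg {p : ℝ} (hp : p < 3 / 4) (n : ℕ) : 0 ≤ erwScale p n :=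
  div_nonneg (sum_nonneg fun k _ => by positivity) (by linarith)

lemma summable_of_le_const_div_succ_sq {f : ℕ → ℝ} {C : ℝ} (hf : ∀ k, 0 ≤ f k)
    (hle : ∀ k : ℕ, f k ≤ C / ((k : ℝ) + 1) ^ 2) : Summable f := by
  have hsquares : Summable fun k : ℕ => 1 / ((k : ℝ) + 1) ^ 2 := by
    simpa using (summable_nat_add_iff 1).2 (Real.summable_one_div_nat_pow.2 one_lt_two)
  refine .of_nonneg_of_le hf (fun k => (hle k).trans_eq ?_) (hsquares.mul_left C)
  rw [mul_one_div]

namespace IsERW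

variable {m0 : MeasurableSpace Ω} {μ : Measure Ω} [IsProbabilityMeasure μ] {ℱ : Filtration ℕ m0}
  {X : ℕ → Ω → ℝ} {p : ℝ}

lemma tendstoInMeasure_erwS_sq_div (hX : IsERW μ ℱ X p) (hp : p < 3 / 4) :
    TendstoInMeasure μ (fun n ω => erwS X n ω ^ 2 / n / erwScale p n) atTop fun _ => 0 := by
  obtain ⟨C, hC, hle⟩ := hX.exists_integral_erwS_sq_le hp
  refine tendstoInMeasure_div_zero_of_integral_abs_le (K := C)
    (fun n => (hX.integrable_erwS_pow n 2).div_const _) (fun n => ?_) (tendsto_erwScale hp)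
  simp only [abs_div, Nat.abs_cast, abs_of_nonneg (sq_nonneg (erwS X n _)), integral_div]
  obtain rfl | hn := Nat.eq_zero_or_pos n
  · simpa using hC
  · exact div_le_of_le_mul₀ n.cast_nonneg hC (hle n hn)

lemma tendstoInMeasure_sum_erwMean_sq_div_succ (hX : IsERW μ ℱ X p) (hp : p < 3 / 4) :
    TendstoInMeasure μ
      (fun n ω => (∑ k ∈ range n, erwMean X k ω ^ 2 / ((k : ℝ) + 1)) / erwScale p n) atTop
      fun _ => 0 := by
  obtain ⟨C, hle⟩ := hX.exists_integral_erwMean_sq_le hp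
  have hnonneg : ∀ (k : ℕ) (ω : Ω), 0 ≤ erwMean X k ω ^ 2 / ((k : ℝ) + 1) :=
    fun k ω => by positivity
  refine tendstoInMeasure_sum_div_zero (fun k => (hX.integrable_erwMean_pow k 2).div_const _)
    hnonneg (summable_of_le_const_div_succ_sq (C := C) (fun k => integral_nonneg (hnonneg k))
      fun k => ?_) (tendsto_erwScale hp)
  rw [integral_div, sq, ← div_div]
  gcongr
  exact hle k

lemma tendstoInMeasure_sum_erwMean_pow_four_div (hX : IsERW μ ℱ X p) (hp : p < 3 / 4) :
    TendstoInMeasure μ (fun n ω => (∑ k ∈ range n, erwMean X k ω ^ 4) / erwScale p n) atTop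
      fun _ => 0 := by
  obtain ⟨C, hle⟩ := hX.exists_integral_erwMean_pow_four_le hp
  have hnonneg : ∀ (k : ℕ) (ω : Ω), 0 ≤ erwMean X k ω ^ 4 := fun k ω => by positivity
  exact tendstoInMeasure_sum_div_zero (fun k => hX.integrable_erwMean_pow k 4) hnonneg
    (summable_of_le_const_div_succ_sq (fun k => integral_nonneg (hnonneg k)) hle)
    (tendsto_erwScale hp)

lemma exists_integral_sum_weighted_erwScore_sq_le (hX : IsERW μ ℱ X p) (hp : p < 3 / 4) :
    ∃ C, ∀ n, ∫ ω, (∑ k ∈ range n, 2 * k / ((k : ℝ) + 1) * erwScore X p k ω) ^ 2 ∂μ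
      ≤ C * erwScale p n := by
  obtain ⟨C, hle⟩ := hX.exists_integral_erwMean_sq_le hp
  have hweight : ∀ k : ℕ, (2 * k / ((k : ℝ) + 1)) ^ 2 ≤ 4 := fun k => by
    have : 2 * k / ((k : ℝ) + 1) ≤ 2 :=
      div_le_of_le_mul₀ (by positivity) (by positivity) (by linarith)
    exact (pow_le_pow_left₀ (by positivity) this 2).trans_eq (by norm_num)
  refine ⟨4 * C * (3 - 4 * p), fun n => ?_⟩
  rw [hX.isBoundedMartingaleDiff_weighted_erwScore.integral_sum_sq]
  calc ∑ k ∈ range n, ∫ ω, (2 * k / ((k : ℝ) + 1) * erwScore X p k ω) ^ 2 ∂μ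
      ≤ ∑ k ∈ range n, 4 * (C / ((k : ℝ) + 1)) := by
        refine sum_le_sum fun k _ => ?_
        simp only [mul_pow, integral_const_mul]
        exact mul_le_mul (hweight k) ((hX.integral_erwScore_sq_le k).trans (hle k))
          (integral_nonneg fun ω => sq_nonneg _) (by norm_num)
    _ = 4 * C * (3 - 4 * p) * erwScale p n := by
        rw [erwScale, mul_assoc, mul_div_cancel₀ _ (by linarith), mul_sum]
        exact sum_congr rfl fun k _ => by ring

lemma tendstoInMeasure_sum_weighted_erwScore_div (hX : IsERW μ ℱ X p) (hp : p < 3 / 4) :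
    TendstoInMeasure μ
      (fun n ω => (∑ k ∈ range n, 2 * k / ((k : ℝ) + 1) * erwScore X p k ω) / erwScale p n) atTop
      fun _ => 0 := by
  obtain ⟨C, hle⟩ := hX.exists_integral_sum_weighted_erwScore_sq_le hp
  have hd := hX.isBoundedMartingaleDiff_weighted_erwScore
  refine tendstoInMeasure_zero_of_integral_pow_le 2 (b := fun n => C / erwScale p n)
    (fun n => ?_) (fun n => ?_) (tendsto_const_nhds.div_atTop (tendsto_erwScale hp))
  · simp only [sq_abs, div_pow]
    exact (hd.integrable_sum_sq n).div_const _
  · simp only [sq_abs, div_pow, integral_div]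
    calc _ ≤ C * erwScale p n / erwScale p n ^ 2 := by gcongr; exact hle n
      _ = C / erwScale p n := by
          obtain hn | hn := eq_or_ne (erwScale p n) 0
          · simp [hn]
          · field_simp

lemma tendstoInMeasure_sum_erwMean_sq_div (hX : IsERW μ ℱ X p) (hp : p < 3 / 4) :
    TendstoInMeasure μ (fun n ω => (∑ k ∈ range n, erwMean X k ω ^ 2) / erwScale p n) atTop
      fun _ => 1 := by
  have hgap : 3 - 4 * p ≠ 0 := by linarith
  have hmartingale := tendstoInMeasure_comp_continuousAt (φ := fun x => 1 + x / (3 - 4 * p))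
    (hX.tendstoInMeasure_sum_weighted_erwScore_div hp) (by fun_prop)
  have hboundary := tendstoInMeasure_comp_continuousAt (φ := fun x => -(x / (3 - 4 * p)))
    (hX.tendstoInMeasure_erwS_sq_div hp) (by fun_prop)
  have hremainder := hX.tendstoInMeasure_sum_erwMean_sq_div_succ hp
  refine (tendstoInMeasure_add (tendstoInMeasure_add hmartingale hboundary) hremainder).congr'
    ?_ (by simp)
  filter_upwards [(tendsto_erwScale hp).eventually_ne_atTop 0] with n hn
  refine ae_of_all _ fun ω => ?_
  have hidentity := hX.erwS_sq_div_eq n ω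
  have hharmonic : ∑ k ∈ range n, 1 / ((k : ℝ) + 1) = erwScale p n * (3 - 4 * p) :=
    (div_mul_cancel₀ _ hgap).symm
  rw [hharmonic] at hidentity
  beta_reduce
  rw [hidentity]
  field_simp
  ring

lemma tendstoInMeasure_predictableVariation_erwScore_div (hX : IsERW μ ℱ X p) (hp : p < 3 / 4) :
    TendstoInMeasure μ (fun n ω => predictableVariation (erwScore X p) ℱ μ n ω / erwScale p n)
      atTop fun _ => 1 := by
  have hquartic := tendstoInMeasure_comp_continuousAt (φ := fun x => -((2 * p - 1) ^ 2 * x))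
    (hX.tendstoInMeasure_sum_erwMean_pow_four_div hp) (by fun_prop)
  refine (tendstoInMeasure_add (hX.tendstoInMeasure_sum_erwMean_sq_div hp) hquartic).congr
    (fun n => ?_) (by simp)
  filter_upwards [ae_all_iff.2 hX.condSq_erwScore] with ω hω
  simp only [predictableVariation, hω, sum_sub_distrib, ← mul_sum]
  ring

theorem tendstoInDistribution_sum_erwScore_div_sqrt (hX : IsERW μ ℱ X p) (hp : p < 3 / 4) :
    TendstoInDistribution
      (fun n ω => (∑ k ∈ range n, erwScore X p k ω) / √(∑ k ∈ range n, erwMean X k ω ^ 2))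
      atTop id (fun _ => μ) (gaussianReal 0 1) := by
  have hd := hX.isBoundedMartingaleDiff_erwScore
  exact tendstoInDistribution_div_sqrt
    (hd.tendstoInDistribution_sum_div_sqrt (erwScale_nonneg hp) (tendsto_erwScale hp)
      (hX.tendstoInMeasure_predictableVariation_erwScore_div hp))
    (hX.tendstoInMeasure_sum_erwMean_sq_div hp) ((tendsto_erwScale hp).eventually_gt_atTop 0)
    (fun n => (hd.measurable_sum n).aemeasurable)
    fun n => (Finset.measurable_fun_sum _ fun k _ =>
      (hX.measurable_erwMean k).pow_const 2).aemeasurable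

end IsERW

lemma sum_Icc_one_pred_eq_sum_range {M : Type*} [AddCommMonoid M] {f : ℕ → M} (hf : f 0 = 0)
    (n : ℕ) : ∑ k ∈ Icc 1 (n - 1), f k = ∑ k ∈ range n, f k := by
  refine sum_subset (fun k hk => ?_) fun k hk hk' => ?_
  · simp only [mem_Icc, mem_range] at hk ⊢
    omega
  · simp only [mem_Icc, mem_range] at hk hk'
    obtain rfl : k = 0 := by omega
    exact hf

lemma sqrt_erwV_mul_erwPhat_sub (X : ℕ → Ω → ℝ) (p : ℝ) (n : ℕ) (ω : Ω) :
    √(erwV X n ω) * (erwPhat X n ω - p)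
      = (∑ k ∈ range n, erwScore X p k ω) / √(∑ k ∈ range n, erwMean X k ω ^ 2) := by
  have hinformation : ∑ k ∈ Icc 1 (n - 1), (erwS X k ω / k) ^ 2
      = ∑ k ∈ range n, erwMean X k ω ^ 2 :=
    sum_Icc_one_pred_eq_sum_range (by simp) n
  have hnumerator :
      ∑ k ∈ Icc 1 (n - 1), (erwS X k ω / k) * (X (k + 1) ω + erwS X k ω / k)
        = ∑ k ∈ range n, erwScore X p k ω + 2 * p * ∑ k ∈ range n, erwMean X k ω ^ 2 := by
    rw [sum_Icc_one_pred_eq_sum_range (by simp), mul_sum, ← sum_add_distrib]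
    refine sum_congr rfl fun k _ => ?_
    rw [erwScore, erwMean]
    ring
  rw [erwV, erwPhat, hinformation, hnumerator]
  set U := ∑ k ∈ range n, erwMean X k ω ^ 2
  set M := ∑ k ∈ range n, erwScore X p k ω
  obtain hU | hU := eq_or_ne U 0
  · simp [hU]
  have hsqrt : √(4 * U) = 2 * √U := by
    rw [Real.sqrt_mul zero_le_four, show (4 : ℝ) = 2 ^ 2 by norm_num, Real.sqrt_sq zero_le_two]
  have herror : (M + 2 * p * U) / (2 * U) - p = M / (2 * U) := by
    field_simp
    ring
  calc √(4 * U) * ((M + 2 * p * U) / (2 * U) - p) = M * (√U / U) := by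
        rw [hsqrt, herror]
        field_simp
    _ = M / √U := by rw [Real.sqrt_div_self', mul_one_div]

lemma tendsto_integral_of_tendstoInDistribution {m0 : MeasurableSpace Ω} {μ : Measure Ω}
    [IsProbabilityMeasure μ] {ν : Measure ℝ} [IsProbabilityMeasure ν] {Y : ℕ → Ω → ℝ}
    (hY : TendstoInDistribution Y atTop id (fun _ => μ) ν) (f : ℝ →ᵇ ℝ) :
    Tendsto (fun n => ∫ ω, f (Y n ω) ∂μ) atTop (𝓝 (∫ y, f y ∂ν)) := by
  have hlim := ProbabilityMeasure.tendsto_iff_forall_integral_tendsto.1 hY.tendsto f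
  simp only [ProbabilityMeasure.coe_mk, Measure.map_id] at hlim
  refine hlim.congr fun n => ?_
  exact integral_map (hY.forall_aemeasurable n) f.continuous.measurable.aestronglyMeasurable

/-- In the diffusive regime `0 ≤ p < 3/4`, `√(V_n) (p̂_n - p)` converges in distribution
to the standard Gaussian law. -/
theorem erw_self_normalized_clt_diffusive
    {m0 : MeasurableSpace Ω} (μ : Measure Ω) [IsProbabilityMeasure μ]
    (ℱ : Filtration ℕ m0) (X : ℕ → Ω → ℝ) (p : ℝ)
    (hERW : IsERW μ ℱ X p) (hp : p < 3 / 4) :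
    ∀ f : ℝ →ᵇ ℝ,
      Tendsto (fun n => ∫ ω, f (Real.sqrt (erwV X n ω) * (erwPhat X n ω - p)) ∂μ)
        atTop (𝓝 (∫ x, f x ∂(gaussianReal 0 1))) := by
  intro f
  simp only [sqrt_erwV_mul_erwPhat_sub]
  exact tendsto_integral_of_tendstoInDistribution
    (hERW.tendstoInDistribution_sum_erwScore_div_sqrt hp) f
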